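/- arXiv:2312.14323 — 6 statements merged into one kernel-verified Lean document; each statement's English description precedes it below -/
import Mathlib

section
/- Let n ≥ 0 be an integer, let k be an integer and let k₀, k₁, …, k_n be nonzero integers. Then |∫_{−π}^{π} [sin(kβ/2)/(2 sin(β/2))] · Π_{j=0}^{n} [sin(k_jβ/2)/(k_j sin(β/2))] dβ| ≤ 4. (The integrand extends continuously to β = 0 since each factor sin(mβ/2)/sin(β/2) is bounded by |m|.) -/
open MeasureTheory

/-!
With `β = 2t`, the ratio `sin (mt) / sin t` is the Chebyshev polynomial `U_{m-1}` evaluated at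
`cos t`. The product formula `U_k U_a = U_{k-a} + U_{k-a+2} + ⋯ + U_{k+a}` exhibits
`U_k · U_{m-1} / m` as an average of `m` Chebyshev polynomials, so multiplication by the normalised
factor `U_{m-1} / m` preserves the convex hull of the `U`s. The integral is a linear functional of
the polynomial, hence it suffices to bound it on each `U_n`. There `U_n - U_{n-2} = 2 T_n`
telescopes to `±π` when `n` is even, and to `±4 (1 - 1/3 + 1/5 - ⋯)`, a partial sum of an
alternating series with first term `4`, when `n` is odd.
-/

theorem alternating_sum_range_mem_Icc_of_antitone {R : Type*} [Ring R] [PartialOrder R]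
    [IsOrderedAddMonoid R] {f : ℕ → R} (hf : Antitone f) (hf_nonneg : ∀ n, 0 ≤ f n) (n : ℕ) :
    ∑ l ∈ Finset.range n, (-1) ^ l * f l ∈ Set.Icc 0 (f 0) := by
  induction n generalizing f with
  | zero => simpa using hf_nonneg 0
  | succ n ih =>
    have tail_mem := ih (f := fun l ↦ f (l + 1))
      (fun _ _ h ↦ hf (Nat.succ_le_succ h)) (fun l ↦ hf_nonneg (l + 1))
    have peel_first : ∑ l ∈ Finset.range (n + 1), (-1) ^ l * f l =
        f 0 - ∑ l ∈ Finset.range n, (-1) ^ l * f (l + 1) := by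
      simp [Finset.sum_range_succ', pow_succ, sub_eq_neg_add]
    rw [peel_first]
    exact ⟨sub_nonneg.2 (tail_mem.2.trans (hf zero_le_one)), sub_le_self _ tail_mem.1⟩

section ConvexHull

open Polynomial Polynomial.Chebyshev

theorem U_mul_U_natCast (R : Type*) [CommRing R] (k : ℤ) (a : ℕ) :
    U R k * U R a = ∑ l ∈ Finset.range (a + 1), U R (k - a + 2 * l) := by
  induction a using Nat.twoStepInduction with
  | zero => simp
  | one =>
    simp only [Nat.cast_one, U_one, Finset.sum_range_succ, Finset.sum_range_zero]
    linear_combination (norm := (push_cast; ring_nf)) -U_add_one R k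
  | more a ih ih_succ =>
    have two_X_mul (l : ℕ) : 2 * X * U R (k - (a + 1 : ℕ) + 2 * l) =
        U R (k - a + 2 * l) + U R (k - (a + 2 : ℕ) + 2 * l) := by
      linear_combination (norm := (push_cast; ring_nf)) -U_add_one R (k - (a + 1 : ℕ) + 2 * l)
    calc U R k * U R (a + 2 : ℕ)
        = 2 * X * (U R k * U R (a + 1 : ℕ)) - U R k * U R a := by
          push_cast
          rw [U_add_two]
          ring
      _ = U R (k - a + 2 * (a + 1 : ℕ)) +
            ∑ l ∈ Finset.range (a + 2), U R (k - (a + 2 : ℕ) + 2 * l) := by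
          rw [ih, ih_succ, Finset.mul_sum, Finset.sum_congr rfl fun l _ ↦ two_X_mul l,
            Finset.sum_add_distrib, Finset.sum_range_succ]
          ring
      _ = ∑ l ∈ Finset.range (a + 2 + 1), U R (k - (a + 2 : ℕ) + 2 * l) := by
          rw [Finset.sum_range_succ _ (a + 2), add_comm]
          congr 2
          push_cast
          ring

theorem inv_smul_U_natAbs_sub_one (𝕜 : Type*) [Field 𝕜] (m : ℤ) :
    (m.natAbs : 𝕜)⁻¹ • U 𝕜 (m.natAbs - 1) = (m : 𝕜)⁻¹ • U 𝕜 (m - 1) := by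
  obtain ⟨a, rfl | rfl⟩ := m.eq_nat_or_neg
  · simp
  · simp [U_neg_sub_one, inv_neg]

variable {𝕜 : Type*} [Field 𝕜] [LinearOrder 𝕜] [IsStrictOrderedRing 𝕜]

theorem U_mul_inv_smul_U_mem_convexHull (k : ℤ) {m : ℤ} (hm : m ≠ 0) :
    U 𝕜 k * ((m : 𝕜)⁻¹ • U 𝕜 (m - 1)) ∈ convexHull 𝕜 (Set.range (U 𝕜)) := by
  obtain ⟨a, ha⟩ := Nat.exists_eq_succ_of_ne_zero (Int.natAbs_ne_zero.2 hm)
  have average : U 𝕜 k * ((m : 𝕜)⁻¹ • U 𝕜 (m - 1)) =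
      ∑ l ∈ Finset.range (a + 1), ((a + 1 : ℕ) : 𝕜)⁻¹ • U 𝕜 (k - a + 2 * l) := by
    rw [← inv_smul_U_natAbs_sub_one, ha, mul_smul_comm, ← Finset.smul_sum, ← U_mul_U_natCast]
    simp
  rw [average]
  refine (convex_convexHull 𝕜 _).sum_mem (fun _ _ ↦ by positivity) ?_
    fun l _ ↦ subset_convexHull 𝕜 _ (Set.mem_range_self _)
  simp [Nat.cast_add_one_ne_zero]

theorem mul_inv_smul_U_mem_convexHull {p : 𝕜[X]} (hp : p ∈ convexHull 𝕜 (Set.range (U 𝕜)))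
    {m : ℤ} (hm : m ≠ 0) :
    p * ((m : 𝕜)⁻¹ • U 𝕜 (m - 1)) ∈ convexHull 𝕜 (Set.range (U 𝕜)) := by
  have preimage_convex := (convex_convexHull 𝕜 (Set.range (U 𝕜))).linear_preimage
    (LinearMap.mulRight 𝕜 ((m : 𝕜)⁻¹ • U 𝕜 (m - 1)))
  refine convexHull_min ?_ preimage_convex hp
  rintro _ ⟨k, rfl⟩
  exact U_mul_inv_smul_U_mem_convexHull k hm

theorem U_mul_prod_inv_smul_U_mem_convexHull {ι : Type*} (k : ℤ) (s : Finset ι) {m : ι → ℤ}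
    (hm : ∀ j ∈ s, m j ≠ 0) :
    U 𝕜 k * ∏ j ∈ s, (m j : 𝕜)⁻¹ • U 𝕜 (m j - 1) ∈ convexHull 𝕜 (Set.range (U 𝕜)) := by
  classical
  induction s using Finset.induction_on with
  | empty => simpa using subset_convexHull 𝕜 _ (Set.mem_range_self k)
  | insert j s hj ih =>
    rw [Finset.prod_insert hj, mul_left_comm, mul_comm]
    exact mul_inv_smul_U_mem_convexHull (ih fun i hi ↦ hm i (Finset.mem_insert_of_mem hi))
      (hm j (Finset.mem_insert_self j s))

end ConvexHull

section CosIntegral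

open Real Polynomial Polynomial.Chebyshev

theorem intervalIntegrable_eval_cos (p : ℝ[X]) (a b : ℝ) :
    IntervalIntegrable (fun t ↦ p.eval (cos t)) volume a b :=
  (p.continuous.comp continuous_cos).intervalIntegrable a b

/-- The linear functional `p ↦ ∫ p (cos t) dt` over the half period `[-π/2, π/2]`, which is the
range of `t = β / 2` for `β ∈ [-π, π]`. -/
noncomputable def cosIntegral : ℝ[X] →ₗ[ℝ] ℝ where
  toFun p := ∫ t in -(π / 2)..π / 2, p.eval (cos t)
  map_add' p q := by
    simp only [eval_add]
    exact intervalIntegral.integral_add (intervalIntegrable_eval_cos p _ _)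
      (intervalIntegrable_eval_cos q _ _)
  map_smul' c p := by simp [eval_smul]

theorem cosIntegral_apply (p : ℝ[X]) :
    cosIntegral p = ∫ t in -(π / 2)..π / 2, p.eval (cos t) :=
  rfl

theorem cosIntegral_T {n : ℤ} (hn : n ≠ 0) :
    cosIntegral (T ℝ n) = 2 * sin (n * (π / 2)) / n := by
  have hn' : (n : ℝ) ≠ 0 := Int.cast_ne_zero.2 hn
  simp only [cosIntegral_apply, T_real_cos]
  rw [intervalIntegral.integral_comp_mul_left cos hn', integral_cos, mul_neg, sin_neg,
    smul_eq_mul]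
  ring

theorem cosIntegral_U_add_two (n : ℤ) :
    cosIntegral (U ℝ (n + 2)) = 2 * cosIntegral (T ℝ (n + 2)) + cosIntegral (U ℝ n) := by
  rw [U_eq_two_mul_T_add_U, map_add, two_mul, map_add, two_mul]

theorem cosIntegral_U_two_mul (i : ℕ) : cosIntegral (U ℝ (2 * i)) = π := by
  induction i with
  | zero => simp [cosIntegral_apply]
  | succ i ih =>
    have T_vanishes : cosIntegral (T ℝ (2 * i + 2)) = 0 := by
      rw [cosIntegral_T (by lia)]
      have angle : ((2 * i + 2 : ℤ) : ℝ) * (π / 2) = (i + 1 : ℕ) * π := by push_cast; ring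
      rw [angle, sin_nat_mul_pi, mul_zero, zero_div]
    rw [Nat.cast_succ, mul_add_one, cosIntegral_U_add_two, T_vanishes, ih, mul_zero, zero_add]

theorem cosIntegral_U_two_mul_sub_one (i : ℕ) :
    cosIntegral (U ℝ (2 * i - 1)) =
      4 * ∑ l ∈ Finset.range i, (-1) ^ l * (1 / (2 * l + 1 : ℝ)) := by
  induction i with
  | zero => simp
  | succ i ih =>
    have T_odd : cosIntegral (T ℝ (2 * i - 1 + 2)) = 2 * ((-1) ^ i * (1 / (2 * i + 1))) := by
      rw [cosIntegral_T (by lia)]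
      have angle : ((2 * i - 1 + 2 : ℤ) : ℝ) * (π / 2) = i * π + π / 2 := by push_cast; ring
      rw [angle, sin_add_pi_div_two, cos_nat_mul_pi]
      push_cast
      ring
    have index : (2 * (i + 1 : ℕ) - 1 : ℤ) = 2 * i - 1 + 2 := by push_cast; ring
    rw [index, cosIntegral_U_add_two, T_odd, ih, Finset.sum_range_succ]
    ring

theorem abs_cosIntegral_U_natCast_sub_one_le (m : ℕ) : |cosIntegral (U ℝ (m - 1))| ≤ 4 := by
  obtain ⟨i, rfl | rfl⟩ := m.even_or_odd'
  · have odd_recip_antitone : Antitone fun l : ℕ ↦ 1 / (2 * l + 1 : ℝ) :=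
      fun _ _ h ↦ by dsimp only; gcongr
    obtain ⟨leibniz_nonneg, leibniz_le⟩ := alternating_sum_range_mem_Icc_of_antitone
      odd_recip_antitone (fun _ ↦ by positivity) i
    rw [Nat.cast_mul, Nat.cast_two, cosIntegral_U_two_mul_sub_one,
      abs_of_nonneg (mul_nonneg zero_le_four leibniz_nonneg)]
    simpa using leibniz_le
  · rw [Nat.cast_succ, add_sub_cancel_right, Nat.cast_mul, Nat.cast_two, cosIntegral_U_two_mul,
      abs_of_pos pi_pos]
    exact pi_le_four

theorem abs_cosIntegral_U_le (n : ℤ) : |cosIntegral (U ℝ n)| ≤ 4 := by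
  obtain ⟨m, hm⟩ | ⟨m, hm⟩ : (∃ m : ℕ, n = m - 1) ∨ ∃ m : ℕ, n = -m - 1 := by
    obtain ⟨m, hm | hm⟩ := (n + 1).eq_nat_or_neg
    · exact .inl ⟨m, by lia⟩
    · exact .inr ⟨m, by lia⟩
  · exact hm ▸ abs_cosIntegral_U_natCast_sub_one_le m
  · rw [hm, U_neg_sub_one, map_neg, abs_neg]
    exact abs_cosIntegral_U_natCast_sub_one_le m

theorem abs_cosIntegral_le_of_mem_convexHull {p : ℝ[X]}
    (hp : p ∈ convexHull ℝ (Set.range (U ℝ))) : |cosIntegral p| ≤ 4 := by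
  have preimage_convex := (convex_closedBall (0 : ℝ) 4).linear_preimage cosIntegral
  have p_mem := convexHull_min (s := Set.range (U ℝ)) ?_ preimage_convex hp
  · simpa using p_mem
  rintro _ ⟨n, rfl⟩
  simpa using abs_cosIntegral_U_le n

end CosIntegral

section SinRatio

open Real Polynomial Polynomial.Chebyshev

theorem sin_int_mul_div_mul_sin (m : ℤ) (c : ℝ) {t : ℝ} (ht : sin t ≠ 0) :
    sin (m * t) / (c * sin t) = c⁻¹ * (U ℝ (m - 1)).eval (cos t) := by
  have U_cos := U_real_cos t (m - 1)
  rw [Int.cast_sub, Int.cast_one, sub_add_cancel] at U_cos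
  rw [← U_cos, mul_div_mul_right _ _ ht, div_eq_inv_mul]

theorem ae_sin_ne_zero : ∀ᵐ t : ℝ, sin t ≠ 0 := by
  filter_upwards [(Set.countable_range fun n : ℤ ↦ (n : ℝ) * π).ae_notMem volume] with t ht
  exact fun h ↦ ht (sin_eq_zero_iff.1 h)

theorem integral_sin_ratio_mul_prod_eq_cosIntegral {ι : Type*} (k : ℤ) (s : Finset ι)
    (m : ι → ℤ) :
    ∫ β in -π..π, sin (k * β / 2) / (2 * sin (β / 2)) *
        ∏ j ∈ s, sin (m j * β / 2) / (m j * sin (β / 2)) =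
      cosIntegral (U ℝ (k - 1) * ∏ j ∈ s, (m j : ℝ)⁻¹ • U ℝ (m j - 1)) := by
  simp only [mul_div_assoc _ _ (2 : ℝ)]
  rw [intervalIntegral.integral_comp_div
    (fun t ↦ sin (k * t) / (2 * sin t) * ∏ j ∈ s, sin (m j * t) / (m j * sin t)) two_ne_zero,
    ← intervalIntegral.integral_smul, cosIntegral_apply, neg_div]
  refine intervalIntegral.integral_congr_ae ?_
  filter_upwards [ae_sin_ne_zero] with t ht _
  simp only [sin_int_mul_div_mul_sin _ _ ht, eval_mul, eval_prod, eval_smul, smul_eq_mul]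
  ring

end SinRatio

/-- Lemma 3.1, first bound: for integers `k` and nonzero integers `k₀,…,k_n`,
`|∫_𝕋 (sin(kβ/2)/(2 sin(β/2))) ∏_{j=0}^n (sin(k_jβ/2)/(k_j sin(β/2))) dβ| ≤ 4`. -/
theorem integral_I1_bound (n : ℕ) (k : ℤ) (ks : Fin (n + 1) → ℤ)
    (hks : ∀ j, ks j ≠ 0) :
    |∫ β in (-Real.pi)..Real.pi,
        (Real.sin (k * β / 2) / (2 * Real.sin (β / 2))) *
          ∏ j : Fin (n + 1), Real.sin (ks j * β / 2) / (ks j * Real.sin (β / 2))| ≤ 4 := by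
  rw [integral_sin_ratio_mul_prod_eq_cosIntegral]
  exact abs_cosIntegral_le_of_mem_convexHull
    (U_mul_prod_inv_smul_U_mem_convexHull (k - 1) Finset.univ fun j _ ↦ hks j)
end

section
/- Let n ≥ 0 be an integer, let k be an integer and let k₀, k₁, …, k_n be nonzero integers. Then |∫_{−π}^{π} [cos(β/2) sin(kβ/2)/(2 sin(β/2))] · Π_{j=0}^{n} [sin(k_jβ/2)/(k_j sin(β/2))] dβ| ≤ 10/3. (The integrand extends continuously to β = 0 since each factor sin(mβ/2)/sin(β/2) is bounded by |m|.) -/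
open MeasureTheory

/-!
Put `F m β = sin (mβ/2) cos (β/2) / sin (β/2)`. By product-to-sum, multiplying `F m` by
`sin (qβ/2) / (q sin (β/2))` produces the average of the `|q|` kernels `F (m + 2i + 1 - |q|)`,
`0 ≤ i < |q|`. Hence the whole integrand is half of a convex combination of kernels, and it is
enough to show `|∫ F m| ≤ 20/3` for every `m`. Since `F (m + 2) - F m` is a sum of two cosines,
`∫ F m` is explicit: it is odd in `m`, equals `2π` for even `m > 0`, and for odd `m > 0` it is `4`
plus a partial sum of the alternating series with terms `8/(1·3), 8/(3·5), …`.
-/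

section

open Real

theorem alternating_sum_mem_Icc {R : Type*} [CommRing R] [LinearOrder R] [IsStrictOrderedRing R]
    {a : ℕ → R} (ha : Antitone a) (ha₀ : ∀ i, 0 ≤ a i) (n : ℕ) :
    ∑ i ∈ Finset.range n, (-1) ^ i * a i ∈ Set.Icc 0 (a 0) := by
  induction n generalizing a with
  | zero => simpa using ha₀ 0
  | succ n ih =>
    obtain ⟨tail_nonneg, tail_le⟩ :=
      ih (a := fun i ↦ a (i + 1)) (fun _ _ h ↦ ha (by lia)) (fun i ↦ ha₀ (i + 1))
    have peel : ∑ i ∈ Finset.range (n + 1), (-1) ^ i * a i =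
        a 0 - ∑ i ∈ Finset.range n, (-1) ^ i * a (i + 1) := by
      simp only [Finset.sum_range_succ', pow_succ, mul_neg_one, neg_mul, Finset.sum_neg_distrib]
      ring
    have first_le : a (0 + 1) ≤ a 0 := ha (Nat.zero_le _)
    rw [peel]
    constructor <;> linarith

theorem sin_mul_sum_sin_arith_progression (a x : ℝ) (q : ℕ) :
    sin x * ∑ i ∈ Finset.range q, sin (a + (2 * i + 1) * x) = sin (a + q * x) * sin (q * x) := by
  have telescope (i : ℕ) : sin x * sin (a + (2 * i + 1) * x) =
      cos (a + 2 * i * x) / 2 - cos (a + 2 * (i + 1 : ℕ) * x) / 2 := by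
    rw [← sub_div, cos_sub_cos]
    push_cast
    ring_nf
    rw [sin_neg]
    ring
  rw [Finset.mul_sum, Finset.sum_congr rfl fun i _ ↦ telescope i, Finset.sum_range_sub',
    ← sub_div, cos_sub_cos]
  push_cast
  ring_nf
  rw [sin_neg]
  ring

theorem integral_cos_mul_neg_pi_pi {c : ℝ} (hc : c ≠ 0) :
    ∫ β in -π..π, cos (c * β) = 2 * sin (c * π) / c := by
  rw [intervalIntegral.integral_comp_mul_left _ hc, integral_cos, mul_neg, sin_neg, smul_eq_mul]
  ring

theorem integral_cos_even_mul_half {m : ℤ} (hm : m ≠ 0) :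
    ∫ β in -π..π, cos ((2 * m : ℤ) * β / 2) = 0 := by
  calc ∫ β in -π..π, cos ((2 * m : ℤ) * β / 2)
      = ∫ β in -π..π, cos (m * β) := by congr! 3; push_cast; ring
    _ = 0 := by simp [integral_cos_mul_neg_pi_pi (Int.cast_ne_zero.2 hm), sin_int_mul_pi]

theorem integral_cos_odd_mul_half (j : ℕ) :
    ∫ β in -π..π, cos ((2 * j + 1 : ℤ) * β / 2) = (-1) ^ j * (4 / (2 * j + 1)) := by
  have sin_eq : sin ((j + 1 / 2) * π) = (-1) ^ j := by
    rw [show (j + 1 / 2) * π = π / 2 + j * π by ring, sin_add_nat_mul_pi, sin_pi_div_two, mul_one]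
  calc ∫ β in -π..π, cos ((2 * j + 1 : ℤ) * β / 2)
      = ∫ β in -π..π, cos ((j + 1 / 2) * β) := by congr! 3; push_cast; ring
    _ = 2 * (-1) ^ j / (j + 1 / 2) := by rw [integral_cos_mul_neg_pi_pi (by positivity), sin_eq]
    _ = (-1) ^ j * (4 / (2 * j + 1)) := by field_simp; ring

theorem ae_sin_half_ne_zero : ∀ᵐ β : ℝ, sin (β / 2) ≠ 0 := by
  have zeros_countable : {β : ℝ | sin (β / 2) = 0}.Countable := by
    refine (Set.countable_range fun n : ℤ ↦ n * π * 2).mono fun β hβ ↦ ?_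
    obtain ⟨n, hn⟩ := sin_eq_zero_iff.1 hβ
    exact ⟨n, by linear_combination 2 * hn⟩
  exact zeros_countable.ae_notMem volume

theorem convex_setOf_integral_mem {E : Type*} [NormedAddCommGroup E] [NormedSpace ℝ E]
    {K : Set E} (hK : Convex ℝ K) (μ : Measure ℝ) (a b : ℝ) :
    Convex ℝ {f : ℝ → E | IntervalIntegrable f μ a b ∧ ∫ x in a..b, f x ∂μ ∈ K} := by
  rintro f ⟨hf, hfK⟩ g ⟨hg, hgK⟩ s t hs ht hst
  refine ⟨(hf.smul s).add (hg.smul t), ?_⟩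
  have integral_combination : ∫ x in a..b, (s • f + t • g) x ∂μ =
      s • (∫ x in a..b, f x ∂μ) + t • ∫ x in a..b, g x ∂μ := by
    simp only [Pi.add_apply]
    rw [intervalIntegral.integral_add (hf.smul s) (hg.smul t)]
    simp only [Pi.smul_apply, intervalIntegral.integral_smul]
  rw [integral_combination]
  exact hK hfK hgK hs ht hst

/-- The kernel `sin (mβ/2) cot (β/2)`, a Dirichlet kernel with halved end terms when `m` is even.
At the zeros of `sin (β/2)` it takes the junk value `0` instead of its limit. -/
noncomputable def cotKernel (m : ℤ) (β : ℝ) : ℝ :=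
  sin (m * β / 2) * cos (β / 2) / sin (β / 2)

/-- The normalized Dirichlet kernel `sin (qβ/2) / (q sin (β/2))`, an average of `|q|` exponentials
when `q ≠ 0`. At the zeros of `sin (β/2)` it takes the junk value `0` instead of its limit. -/
noncomputable def sinRatio (q : ℤ) (β : ℝ) : ℝ :=
  sin (q * β / 2) / (q * sin (β / 2))

theorem cotKernel_neg (m : ℤ) (β : ℝ) : cotKernel (-m) β = -cotKernel m β := by
  simp only [cotKernel, Int.cast_neg, neg_mul, neg_div, sin_neg]

theorem sinRatio_neg (q : ℤ) : sinRatio (-q) = sinRatio q := by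
  ext β
  simp only [sinRatio, Int.cast_neg, neg_mul, neg_div, sin_neg, div_neg, neg_neg]

theorem cotKernel_add_two {β : ℝ} (hβ : sin (β / 2) ≠ 0) (m : ℤ) :
    cotKernel (m + 2) β = cotKernel m β + (cos ((m + 2 : ℤ) * β / 2) + cos (m * β / 2)) := by
  have sin_diff : sin ((m + 2 : ℤ) * β / 2) - sin (m * β / 2) =
      2 * sin (β / 2) * cos ((m + 1) * β / 2) := by
    rw [sin_sub_sin]; push_cast; ring_nf
  have cos_sum : cos ((m + 2 : ℤ) * β / 2) + cos (m * β / 2) =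
      2 * cos ((m + 1) * β / 2) * cos (β / 2) := by
    rw [cos_add_cos]; push_cast; ring_nf
  rw [cos_sum, cotKernel, cotKernel, div_eq_iff hβ, add_mul, div_mul_cancel₀ _ hβ]
  linear_combination cos (β / 2) * sin_diff

theorem cotKernel_eq_chebyshev {β : ℝ} (hβ : sin (β / 2) ≠ 0) (m : ℤ) :
    cotKernel m β = (Polynomial.Chebyshev.U ℝ (m - 1)).eval (cos (β / 2)) * cos (β / 2) := by
  have h := Polynomial.Chebyshev.U_real_cos (β / 2) (m - 1)
  rw [Int.cast_sub, Int.cast_one, sub_add_cancel, ← mul_div_assoc] at h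
  rw [cotKernel, ← h]
  field_simp

theorem intervalIntegrable_cotKernel (m : ℤ) (a b : ℝ) :
    IntervalIntegrable (cotKernel m) volume a b := by
  have continuous_version : Continuous fun β : ℝ ↦
      (Polynomial.Chebyshev.U ℝ (m - 1)).eval (cos (β / 2)) * cos (β / 2) := by fun_prop
  refine (continuous_version.intervalIntegrable a b).congr_ae (ae_restrict_of_ae ?_)
  filter_upwards [ae_sin_half_ne_zero] with β hβ
  exact (cotKernel_eq_chebyshev hβ m).symm

theorem integral_cotKernel_neg (m : ℤ) (a b : ℝ) :
    ∫ β in a..b, cotKernel (-m) β = -∫ β in a..b, cotKernel m β := by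
  simp only [cotKernel_neg, intervalIntegral.integral_neg]

theorem integral_cotKernel_add_two (m : ℤ) (a b : ℝ) :
    ∫ β in a..b, cotKernel (m + 2) β = (∫ β in a..b, cotKernel m β) +
      ((∫ β in a..b, cos ((m + 2 : ℤ) * β / 2)) + ∫ β in a..b, cos (m * β / 2)) := by
  have cos_integrable (l : ℤ) : IntervalIntegrable (fun β ↦ cos (l * β / 2)) volume a b :=
    Continuous.intervalIntegrable (by fun_prop) a b
  rw [← intervalIntegral.integral_add (cos_integrable _) (cos_integrable _),
    ← intervalIntegral.integral_add (intervalIntegrable_cotKernel m a b)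
      ((cos_integrable _).add (cos_integrable _))]
  refine intervalIntegral.integral_congr_ae ?_
  filter_upwards [ae_sin_half_ne_zero] with β hβ _
  exact cotKernel_add_two hβ m

theorem integral_cotKernel_zero (a b : ℝ) : ∫ β in a..b, cotKernel 0 β = 0 := by
  simp [cotKernel]

theorem integral_cotKernel_even (j : ℕ) : ∫ β in -π..π, cotKernel (2 * (j + 1)) β = 2 * π := by
  induction j with
  | zero =>
    have h := integral_cotKernel_add_two 0 (-π) π
    rw [integral_cotKernel_zero, show (0 + 2 : ℤ) = 2 * 1 from rfl,
      integral_cos_even_mul_half one_ne_zero] at h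
    simpa [two_mul] using h
  | succ j ih =>
    have h := integral_cotKernel_add_two (2 * (j + 1)) (-π) π
    rw [ih, show (2 * (j + 1) + 2 : ℤ) = 2 * ((j + 1 : ℕ) + 1) by push_cast; ring,
      integral_cos_even_mul_half (by lia), integral_cos_even_mul_half (by lia)] at h
    simpa using h

-- By oddness the recurrence at `m = -1` reads `∫ cotKernel 1 = -∫ cotKernel 1 + 2 ∫ cos (β/2)`.
theorem integral_cotKernel_one : ∫ β in -π..π, cotKernel 1 β = 4 := by
  have recurrence := integral_cotKernel_add_two (-1) (-π) π
  have cos_integral := integral_cos_odd_mul_half 0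
  rw [integral_cotKernel_neg] at recurrence
  norm_num [neg_div] at recurrence cos_integral
  linarith

theorem integral_cotKernel_odd (j : ℕ) : ∫ β in -π..π, cotKernel (2 * j + 1) β =
    4 + ∑ i ∈ Finset.range j, (-1) ^ i * (8 / ((2 * i + 1) * (2 * i + 3)) : ℝ) := by
  induction j with
  | zero => simpa using integral_cotKernel_one
  | succ j ih =>
    have partial_fractions : (-1) ^ (j + 1) * (4 / (2 * (j + 1 : ℕ) + 1)) +
        (-1) ^ j * (4 / (2 * j + 1)) =
        (-1) ^ j * (8 / ((2 * j + 1) * (2 * j + 3)) : ℝ) := by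
      push_cast
      field_simp
      ring
    have h := integral_cotKernel_add_two (2 * j + 1) (-π) π
    rw [ih, show (2 * j + 1 + 2 : ℤ) = 2 * (j + 1 : ℕ) + 1 by push_cast; ring,
      integral_cos_odd_mul_half, integral_cos_odd_mul_half, partial_fractions] at h
    rw [h, Finset.sum_range_succ, add_assoc]

theorem integral_cotKernel_odd_mem_Icc (j : ℕ) :
    ∫ β in -π..π, cotKernel (2 * j + 1) β ∈ Set.Icc 4 (20 / 3) := by
  have terms_antitone : Antitone fun i : ℕ ↦ (8 / ((2 * i + 1) * (2 * i + 3)) : ℝ) := by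
    intro i i' h
    dsimp only
    gcongr
  obtain ⟨sum_nonneg, sum_le⟩ := alternating_sum_mem_Icc terms_antitone (fun i ↦ by positivity) j
  norm_num at sum_le
  rw [integral_cotKernel_odd]
  constructor <;> linarith

theorem abs_integral_cotKernel_natCast_le (n : ℕ) : |∫ β in -π..π, cotKernel n β| ≤ 20 / 3 := by
  obtain ⟨j, rfl | rfl⟩ := n.even_or_odd'
  · cases j with
    | zero => norm_num [integral_cotKernel_zero]
    | succ j =>
      push_cast
      rw [integral_cotKernel_even, abs_of_pos two_pi_pos]
      linarith [pi_lt_d2]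
  · push_cast
    obtain ⟨lower, upper⟩ := integral_cotKernel_odd_mem_Icc j
    rw [abs_of_nonneg (by linarith)]
    exact upper

theorem abs_integral_cotKernel_le (m : ℤ) : |∫ β in -π..π, cotKernel m β| ≤ 20 / 3 := by
  obtain ⟨n, rfl | rfl⟩ := m.eq_nat_or_neg
  · exact abs_integral_cotKernel_natCast_le n
  · rw [integral_cotKernel_neg, abs_neg]
    exact abs_integral_cotKernel_natCast_le n

theorem cotKernel_mul_sinRatio (m : ℤ) {q : ℕ} (hq : q ≠ 0) :
    cotKernel m * sinRatio q =
      ∑ i ∈ Finset.range q, (q : ℝ)⁻¹ • cotKernel (m + (2 * i + 1 - q)) := by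
  ext β
  have sum_sin : (∑ i ∈ Finset.range q, sin ((m + (2 * i + 1 - q) : ℤ) * β / 2)) * sin (β / 2) =
      sin (m * β / 2) * sin (q * β / 2) := by
    rw [mul_comm]
    convert sin_mul_sum_sin_arith_progression ((m - q) * (β / 2)) (β / 2) q using 5 <;>
      push_cast <;> ring
  simp only [Pi.mul_apply, Finset.sum_apply, Pi.smul_apply, smul_eq_mul, cotKernel, sinRatio,
    Int.cast_natCast, ← Finset.mul_sum, ← Finset.sum_div, ← Finset.sum_mul]
  rcases eq_or_ne (sin (β / 2)) 0 with hβ | hβ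
  · simp [hβ]
  · rw [eq_div_of_mul_eq hβ sum_sin]
    field_simp

theorem cotKernel_mul_sinRatio_mem_convexHull (m : ℤ) {q : ℤ} (hq : q ≠ 0) :
    cotKernel m * sinRatio q ∈ convexHull ℝ (Set.range cotKernel) := by
  have natCast_case {n : ℕ} (hn : n ≠ 0) :
      cotKernel m * sinRatio n ∈ convexHull ℝ (Set.range cotKernel) := by
    rw [cotKernel_mul_sinRatio m hn]
    exact (convex_convexHull ℝ _).sum_mem (fun _ _ ↦ by positivity) (by simp [hn])
      fun _ _ ↦ subset_convexHull ℝ _ (Set.mem_range_self _)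
  obtain ⟨n, rfl | rfl⟩ := q.eq_nat_or_neg
  · exact natCast_case (by simpa using hq)
  · rw [sinRatio_neg]
    exact natCast_case (by simpa using hq)

theorem mul_sinRatio_mem_convexHull {f : ℝ → ℝ} (hf : f ∈ convexHull ℝ (Set.range cotKernel))
    {q : ℤ} (hq : q ≠ 0) : f * sinRatio q ∈ convexHull ℝ (Set.range cotKernel) := by
  refine convexHull_min ?_
    ((convex_convexHull ℝ _).linear_preimage (LinearMap.mulRight ℝ (sinRatio q))) hf
  rintro _ ⟨m, rfl⟩
  exact cotKernel_mul_sinRatio_mem_convexHull m hq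

theorem cotKernel_mul_prod_sinRatio_mem_convexHull {ι : Type*} (m : ℤ) (s : Finset ι) {ks : ι → ℤ}
    (hks : ∀ j ∈ s, ks j ≠ 0) :
    cotKernel m * ∏ j ∈ s, sinRatio (ks j) ∈ convexHull ℝ (Set.range cotKernel) := by
  induction s using Finset.cons_induction with
  | empty => simpa using subset_convexHull ℝ _ (Set.mem_range_self m)
  | cons j s hj ih =>
    rw [Finset.forall_mem_cons] at hks
    rw [Finset.prod_cons, mul_comm (sinRatio _), ← mul_assoc]
    exact mul_sinRatio_mem_convexHull (ih hks.2) hks.1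

theorem abs_integral_le_of_mem_convexHull_cotKernel {f : ℝ → ℝ}
    (hf : f ∈ convexHull ℝ (Set.range cotKernel)) : |∫ β in -π..π, f β| ≤ 20 / 3 := by
  have range_subset : Set.range cotKernel ⊆ {f : ℝ → ℝ | IntervalIntegrable f volume (-π) π ∧
      ∫ β in -π..π, f β ∈ Set.Icc (-(20 / 3)) (20 / 3)} := by
    rintro _ ⟨m, rfl⟩
    exact ⟨intervalIntegrable_cotKernel m _ _, abs_le.1 (abs_integral_cotKernel_le m)⟩
  exact abs_le.2 (convexHull_min range_subset
    (convex_setOf_integral_mem (convex_Icc _ _) volume _ _) hf).2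

end

/-- Lemma 3.1, second bound: for integers `k` and nonzero integers `k₀,…,k_n`,
`|∫_𝕋 (cos(β/2) sin(kβ/2)/(2 sin(β/2))) ∏_{j=0}^n (sin(k_jβ/2)/(k_j sin(β/2))) dβ| ≤ 10/3`. -/
theorem integral_I2_bound (n : ℕ) (k : ℤ) (ks : Fin (n + 1) → ℤ)
    (hks : ∀ j, ks j ≠ 0) :
    |∫ β in (-Real.pi)..Real.pi,
        (Real.cos (β / 2) * Real.sin (k * β / 2) / (2 * Real.sin (β / 2))) *
          ∏ j : Fin (n + 1), Real.sin (ks j * β / 2) / (ks j * Real.sin (β / 2))| ≤ 10 / 3 := by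
  have integrand_eq (β : ℝ) :
      (Real.cos (β / 2) * Real.sin (k * β / 2) / (2 * Real.sin (β / 2))) *
        ∏ j, Real.sin (ks j * β / 2) / (ks j * Real.sin (β / 2)) =
      1 / 2 * (cotKernel k * ∏ j, sinRatio (ks j)) β := by
    simp only [Pi.mul_apply, Finset.prod_apply, cotKernel, sinRatio]
    ring
  have bound := abs_integral_le_of_mem_convexHull_cotKernel
    (cotKernel_mul_prod_sinRatio_mem_convexHull k Finset.univ fun j _ ↦ hks j)
  simp only [integrand_eq]
  rw [intervalIntegral.integral_const_mul, abs_mul, abs_of_pos one_half_pos]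
  linarith
end

section
/- For all integers k and A, the quantity I₁(k,A) = 2∫_0^{π/2} sin(kx) cos(Ax)/sin(x) dx satisfies |I₁(k,A)| ≤ 4. (The integrand extends continuously to x = 0 since |sin(kx)/sin(x)| ≤ |k| on (0, π/2].) -/
open MeasureTheory

/-!
Writing `J n = ∫₀^{π/2} sin (n x) / sin x dx`, the product-to-sum formula turns `I₁(k, A)` into
`J (k + A) + J (k - A)`, so it suffices that `|J n| ≤ 2`. Integrating
`sin ((n + 2) x) - sin (n x) = 2 cos ((n + 1) x) sin x` gives a two-step recursion, from which
`J n = π / 2` for odd `n > 0`, while `J (2 m)` is the `m`-th partial sum of the alternating series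
`2 - 2/3 + 2/5 - ⋯`, which lies between `0` and its first term.
-/

theorem alternating_sum_range_mem_Icc {R : Type*} [Ring R] [PartialOrder R] [IsOrderedAddMonoid R]
    {f : ℕ → R} (hf : Antitone f) (hf₀ : ∀ i, 0 ≤ f i) (n : ℕ) :
    ∑ i ∈ Finset.range n, (-1) ^ i * f i ∈ Set.Icc 0 (f 0) := by
  induction n generalizing f with
  | zero => simpa using hf₀ 0
  | succ n ih =>
    obtain ⟨tail_nonneg, tail_le⟩ := ih (hf.comp_monotone Order.succ_mono) fun i ↦ hf₀ (i + 1)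
    have head_sub_tail : ∑ i ∈ Finset.range (n + 1), (-1) ^ i * f i =
        f 0 - ∑ i ∈ Finset.range n, (-1) ^ i * f (i + 1) := by
      simp [Finset.sum_range_succ', pow_succ, sub_eq_neg_add]
    rw [head_sub_tail]
    exact ⟨sub_nonneg.2 (tail_le.trans (hf zero_le_one)), sub_le_self _ tail_nonneg⟩

theorem ae_sin_ne_zero_s4 : ∀ᵐ x : ℝ, Real.sin x ≠ 0 := by
  have zeros_countable : (Set.range fun n : ℤ ↦ n * Real.pi).Countable := Set.countable_range _
  filter_upwards [zeros_countable.ae_notMem volume] with x hx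
  exact fun h ↦ hx (Real.sin_eq_zero_iff.1 h)

theorem sin_int_mul_div_sin (n : ℤ) {x : ℝ} (hx : Real.sin x ≠ 0) :
    Real.sin (n * x) / Real.sin x = (Polynomial.Chebyshev.U ℝ (n - 1)).eval (Real.cos x) := by
  rw [div_eq_iff hx, Polynomial.Chebyshev.U_real_cos]
  simp

theorem intervalIntegrable_sin_int_mul_div_sin (n : ℤ) (a b : ℝ) :
    IntervalIntegrable (fun x ↦ Real.sin (n * x) / Real.sin x) volume a b := by
  have chebyshev_integrable : IntervalIntegrable
      (fun x ↦ (Polynomial.Chebyshev.U ℝ (n - 1)).eval (Real.cos x)) volume a b :=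
    Continuous.intervalIntegrable (by fun_prop) a b
  refine chebyshev_integrable.congr_ae (ae_restrict_of_ae ?_)
  filter_upwards [ae_sin_ne_zero_s4] with x hx
  exact (sin_int_mul_div_sin n hx).symm

theorem sin_add_two_mul_div_sin (a : ℝ) {x : ℝ} (hx : Real.sin x ≠ 0) :
    Real.sin ((a + 2) * x) / Real.sin x =
      Real.sin (a * x) / Real.sin x + 2 * Real.cos ((a + 1) * x) := by
  have sin_diff : Real.sin ((a + 2) * x) - Real.sin (a * x) =
      2 * Real.sin x * Real.cos ((a + 1) * x) := by
    rw [Real.sin_sub_sin]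
    ring_nf
  rw [← sub_eq_iff_eq_add', ← sub_div, sin_diff]
  field_simp

theorem integral_cos_const_mul {c : ℝ} (hc : c ≠ 0) (a b : ℝ) :
    ∫ x in a..b, Real.cos (c * x) = (Real.sin (c * b) - Real.sin (c * a)) / c := by
  rw [intervalIntegral.integral_comp_mul_left _ hc, integral_cos, smul_eq_mul, inv_mul_eq_div]

/-- The integral of the Dirichlet-type kernel `sin (n x) / sin x` over `[0, π / 2]`, to which
`I₁` reduces. At `x = 0` the integrand has the junk value `0` instead of its limit `n`. -/
noncomputable def sinQuotientIntegral (n : ℤ) : ℝ :=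
  ∫ x in (0 : ℝ)..(Real.pi / 2), Real.sin (n * x) / Real.sin x

theorem sinQuotientIntegral_zero : sinQuotientIntegral 0 = 0 := by
  simp [sinQuotientIntegral]

theorem sinQuotientIntegral_one : sinQuotientIntegral 1 = Real.pi / 2 := by
  have integrand_eq_one : ∀ᵐ x : ℝ, x ∈ Set.uIoc 0 (Real.pi / 2) →
      Real.sin ((1 : ℤ) * x) / Real.sin x = 1 := by
    filter_upwards [ae_sin_ne_zero_s4] with x hx _
    simp [hx]
  rw [sinQuotientIntegral, intervalIntegral.integral_congr_ae integrand_eq_one]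
  simp

theorem sinQuotientIntegral_neg (n : ℤ) : sinQuotientIntegral (-n) = -sinQuotientIntegral n := by
  simp [sinQuotientIntegral, neg_div]

theorem sinQuotientIntegral_add_two {n : ℤ} (hn : n + 1 ≠ 0) :
    sinQuotientIntegral (n + 2) =
      sinQuotientIntegral n + 2 * (Real.sin ((n + 1) * (Real.pi / 2)) / (n + 1)) := by
  have integrand_eq : ∀ᵐ x : ℝ, x ∈ Set.uIoc 0 (Real.pi / 2) →
      Real.sin ((n + 2 : ℤ) * x) / Real.sin x =
        Real.sin (n * x) / Real.sin x + 2 * Real.cos ((n + 1) * x) := by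
    filter_upwards [ae_sin_ne_zero_s4] with x hx _
    exact_mod_cast sin_add_two_mul_div_sin n hx
  have cos_integrable : IntervalIntegrable (fun x : ℝ ↦ 2 * Real.cos ((n + 1) * x)) volume
      0 (Real.pi / 2) := Continuous.intervalIntegrable (by fun_prop) _ _
  rw [sinQuotientIntegral, intervalIntegral.integral_congr_ae integrand_eq,
    intervalIntegral.integral_add (intervalIntegrable_sin_int_mul_div_sin n _ _) cos_integrable,
    intervalIntegral.integral_const_mul, integral_cos_const_mul (by exact_mod_cast hn)]
  simp [sinQuotientIntegral]

theorem sinQuotientIntegral_two_mul_add_one (m : ℕ) :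
    sinQuotientIntegral (2 * m + 1) = Real.pi / 2 := by
  induction m with
  | zero => simpa using sinQuotientIntegral_one
  | succ m ih =>
    have sin_eq_zero : Real.sin (((2 * m + 1 : ℤ) + 1) * (Real.pi / 2)) = 0 := by
      rw [← Real.sin_nat_mul_pi (m + 1)]
      push_cast
      ring_nf
    rw [show (2 * (m + 1 : ℕ) + 1 : ℤ) = 2 * m + 1 + 2 by push_cast; ring,
      sinQuotientIntegral_add_two (by lia), sin_eq_zero, ih]
    simp

theorem sinQuotientIntegral_two_mul (m : ℕ) :
    sinQuotientIntegral (2 * m) = ∑ j ∈ Finset.range m, (-1) ^ j * (2 / (2 * j + 1) : ℝ) := by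
  induction m with
  | zero => simpa using sinQuotientIntegral_zero
  | succ m ih =>
    have sin_eq_neg_one_pow : Real.sin (((2 * m : ℤ) + 1) * (Real.pi / 2)) = (-1) ^ m := by
      rw [← Real.cos_nat_mul_pi, ← Real.sin_add_pi_div_two]
      push_cast
      ring_nf
    rw [show (2 * (m + 1 : ℕ) : ℤ) = 2 * m + 2 by push_cast; ring,
      sinQuotientIntegral_add_two (by lia), sin_eq_neg_one_pow, ih, Finset.sum_range_succ]
    push_cast
    ring

theorem sinQuotientIntegral_two_mul_mem_Icc (m : ℕ) :
    sinQuotientIntegral (2 * m) ∈ Set.Icc 0 2 := by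
  have terms_antitone : Antitone fun j : ℕ ↦ (2 / (2 * j + 1) : ℝ) := fun i j hij ↦ by
    dsimp only
    gcongr
  simpa [sinQuotientIntegral_two_mul] using
    alternating_sum_range_mem_Icc terms_antitone (fun j ↦ by positivity) m

theorem abs_sinQuotientIntegral_natCast_le_two (n : ℕ) : |sinQuotientIntegral n| ≤ 2 := by
  obtain ⟨m, rfl | rfl⟩ := n.even_or_odd'
  · obtain ⟨nonneg, le_two⟩ := sinQuotientIntegral_two_mul_mem_Icc m
    push_cast
    rwa [abs_of_nonneg nonneg]
  · push_cast
    rw [sinQuotientIntegral_two_mul_add_one, abs_of_pos Real.pi_div_two_pos]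
    linarith [Real.pi_le_four]

theorem abs_sinQuotientIntegral_le_two (n : ℤ) : |sinQuotientIntegral n| ≤ 2 := by
  obtain ⟨m, rfl | rfl⟩ := n.eq_nat_or_neg
  · exact abs_sinQuotientIntegral_natCast_le_two m
  · rw [sinQuotientIntegral_neg, abs_neg]
    exact abs_sinQuotientIntegral_natCast_le_two m

theorem two_mul_integral_sin_mul_cos_div_sin (k A : ℤ) :
    2 * ∫ x in (0 : ℝ)..(Real.pi / 2), Real.sin (k * x) * Real.cos (A * x) / Real.sin x =
      sinQuotientIntegral (k + A) + sinQuotientIntegral (k - A) := by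
  have product_to_sum (x : ℝ) :
      2 * (Real.sin (k * x) * Real.cos (A * x) / Real.sin x) =
        Real.sin ((k + A : ℤ) * x) / Real.sin x + Real.sin ((k - A : ℤ) * x) / Real.sin x := by
    push_cast
    rw [add_mul, sub_mul, Real.sin_add, Real.sin_sub]
    ring
  simp_rw [← intervalIntegral.integral_const_mul, product_to_sum]
  exact intervalIntegral.integral_add (intervalIntegrable_sin_int_mul_div_sin _ _ _)
    (intervalIntegrable_sin_int_mul_div_sin _ _ _)

/-- For all integers `k` and `A`, `|I₁(k,A)| = |2∫₀^{π/2} sin(kx)cos(Ax)/sin(x) dx| ≤ 4`. -/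
theorem I1_integral_bound (k A : ℤ) :
    |2 * ∫ x in (0 : ℝ)..(Real.pi / 2),
        Real.sin (k * x) * Real.cos (A * x) / Real.sin x| ≤ 4 := by
  rw [two_mul_integral_sin_mul_cos_div_sin]
  calc |sinQuotientIntegral (k + A) + sinQuotientIntegral (k - A)|
      ≤ |sinQuotientIntegral (k + A)| + |sinQuotientIntegral (k - A)| := abs_add_le _ _
    _ ≤ 2 + 2 :=
      add_le_add (abs_sinQuotientIntegral_le_two _) (abs_sinQuotientIntegral_le_two _)
    _ = 4 := by norm_num
end

section
/- Let A_μ ∈ [−1,1] and A_{ρσ} ∈ ℝ, and define a_k and b_k for k ≥ 1 and the matrices S and S⁻¹ as in the context. Then: (i) for all integers k, j ≥ 1, Σ_{m=1}^{∞} S_{k,m} S⁻¹_{m,j} = δ_{k,j} and Σ_{m=1}^{∞} S⁻¹_{k,m} S_{m,j} = δ_{k,j} (each sum has only finitely many nonzero terms, namely k ≤ m ≤ j); (ii) for all integers j > k ≥ 2 one has the recursion (a_k − a_j) S⁻¹_{k,j} = −b_{j−1} S⁻¹_{k,j−1}, so that for every k ≥ 2 and j ≥ 1, −a_j S⁻¹_{k,j}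 + b_{j−1} S⁻¹_{k,j−1} = −a_k S⁻¹_{k,j} (with the conventions S⁻¹_{k,0} := 0 and b_0 := 0). -/
open scoped BigOperators

/-- `a_k = k(k² − 1 + δ₁(k))`. -/
noncomputable def aCoef (k : ℕ) : ℂ :=
  (k : ℂ) * ((k : ℂ) ^ 2 - 1 + if k = 1 then 1 else 0)

/-- `b_k = i(1 − A_μ)A_{ρσ} k`. -/
noncomputable def bCoef (Aμ Aρσ : ℝ) (k : ℕ) : ℂ :=
  Complex.I * ((1 - Aμ) : ℝ) * (Aρσ : ℝ) * (k : ℂ)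

/-- The matrix `S⁻¹`. -/
noncomputable def Sinv (Aμ Aρσ : ℝ) (k j : ℕ) : ℂ :=
  if k = 1 ∧ j = 1 then 1
  else if 2 ≤ k ∧ k ≤ j then
    (-1 : ℂ) ^ (j - k) *
      ∏ l ∈ Finset.Icc 1 (j - k), bCoef Aμ Aρσ (k - 1 + l) / (aCoef k - aCoef (k + l))
  else 0

/-- The matrix `S`. -/
noncomputable def Smat (Aμ Aρσ : ℝ) (k j : ℕ) : ℂ :=
  if k = 1 ∧ j = 1 then 1
  else if 2 ≤ k ∧ k ≤ j then
    ∏ l ∈ Finset.Icc 1 (j - k), bCoef Aμ Aρσ (k - 1 + l) / (aCoef (k - 1 + l) - aCoef j)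
  else 0

/-!
Let `M` be the upper bidiagonal matrix with diagonal `d = -a` and superdiagonal `b`. Solving the
eigenvector equations `M R = R D` and `L M = D L`, where `D = diag d`, by backward and forward
substitution gives the products defining `S = R` and `S⁻¹ = L`. Hence `L R` commutes with `D` and
`R L` commutes with `M`. An upper triangular matrix with unit diagonal which commutes with an upper
triangular matrix with distinct diagonal entries is the identity, so `L R = 1 = R L`.

The decoupled first row of `S` and `S⁻¹` is what the same products give once `b₁` is replaced
by `0`. Upper triangular infinite matrices are elements of the incidence algebra of `ℕ`.
-/

section Commutant

variable {𝕜 α : Type*} [PartialOrder α] [LocallyFiniteOrder α]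

theorem incidenceAlgebra_eq_zero_of_commute [CommRing 𝕜] [NoZeroDivisors 𝕜]
    {f g : IncidenceAlgebra 𝕜 α} (hfg : Commute f g) (hf : Function.Injective fun x ↦ f x x)
    (hg : ∀ x, g x x = 0) : g = 0 := by
  suffices h : ∀ n x y, (Finset.Icc x y).card = n → g x y = 0 by
    ext x y -
    exact h _ x y rfl
  intro n
  induction n using Nat.strong_induction_on with | _ n ih
  rintro x y rfl
  by_cases hxy : x ≤ y
  swap
  · exact IncidenceAlgebra.apply_eq_zero_of_not_le hxy g
  obtain rfl | hne := eq_or_ne x y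
  · exact hg x
  have hfg_apply : (f * g) x y = f x x * g x y := by
    refine Finset.sum_eq_single_of_mem x (Finset.left_mem_Icc.2 hxy) fun z hz hzx ↦ ?_
    have hxz : x ≤ z := (Finset.mem_Icc.1 hz).1
    rw [ih _ (Finset.card_lt_card <|
      Finset.Icc_ssubset_Icc_left hxy (hxz.lt_of_ne' hzx) le_rfl) z y rfl, mul_zero]
  have hgf_apply : (g * f) x y = g x y * f y y := by
    refine Finset.sum_eq_single_of_mem y (Finset.right_mem_Icc.2 hxy) fun z hz hzy_ne ↦ ?_
    have hzy : z ≤ y := (Finset.mem_Icc.1 hz).2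
    rw [ih _ (Finset.card_lt_card <|
      Finset.Icc_ssubset_Icc_right hxy le_rfl (hzy.lt_of_ne hzy_ne)) x z rfl, zero_mul]
  have hmul : (f x x - f y y) * g x y = 0 := by
    linear_combination hgf_apply - hfg_apply + congr($hfg.eq x y)
  exact (mul_eq_zero.1 hmul).resolve_left (sub_ne_zero.2 (hf.ne hne))

theorem incidenceAlgebra_eq_one_of_commute [DecidableEq α] [CommRing 𝕜] [NoZeroDivisors 𝕜]
    {f g : IncidenceAlgebra 𝕜 α} (hfg : Commute f g) (hf : Function.Injective fun x ↦ f x x)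
    (hg : ∀ x, g x x = 1) : g = 1 :=
  sub_eq_zero.1 <| incidenceAlgebra_eq_zero_of_commute (hfg.sub_right (Commute.one_right f)) hf
    fun x ↦ by simp [IncidenceAlgebra.sub_apply, hg]

end Commutant

theorem tsum_incidenceAlgebra_mul {𝕜 α : Type*} [Preorder α] [LocallyFiniteOrder α]
    [NonUnitalNonAssocSemiring 𝕜] [TopologicalSpace 𝕜] (f g : IncidenceAlgebra 𝕜 α) (x y : α) :
    ∑' z, f x z * g z y = (f * g) x y := by
  refine tsum_eq_sum fun z hz ↦ ?_
  by_cases hxz : x ≤ z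
  · have hzy : ¬z ≤ y := fun hzy ↦ hz (Finset.mem_Icc.2 ⟨hxz, hzy⟩)
    rw [IncidenceAlgebra.apply_eq_zero_of_not_le hzy, mul_zero]
  · rw [IncidenceAlgebra.apply_eq_zero_of_not_le hxz, zero_mul]

section Bidiagonal

/-- The infinite upper bidiagonal matrix with diagonal `d` and superdiagonal `b`; in particular
`bidiagonal d 0` is the diagonal matrix with entries `d`. -/
def bidiagonal {R : Type*} [AddZeroClass R] (d b : ℕ → R) : IncidenceAlgebra R ℕ where
  toFun k j := (if j = k then d k else 0) + if j = k + 1 then b k else 0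
  eq_zero_of_not_le' k j h := by rw [if_neg (by omega), if_neg (by omega), add_zero]

theorem bidiagonal_apply_self {R : Type*} [AddZeroClass R] (d b : ℕ → R) (k : ℕ) :
    bidiagonal d b k k = d k := by
  simp [bidiagonal]

section Semiring

variable {R : Type*} [NonUnitalNonAssocSemiring R] (d b : ℕ → R) (f : IncidenceAlgebra R ℕ)

theorem bidiagonal_mul_apply (k j : ℕ) :
    (bidiagonal d b * f) k j = d k * f k j + b k * f (k + 1) j := by
  have hf : ∀ {m}, k ≤ m → m ∉ Finset.Icc k j → f m j = 0 := fun hkm hm ↦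
    IncidenceAlgebra.apply_eq_zero_of_not_le (fun hmj ↦ hm (Finset.mem_Icc.2 ⟨hkm, hmj⟩)) f
  simp only [IncidenceAlgebra.mul_apply, bidiagonal, IncidenceAlgebra.coe_mk, add_mul, ite_mul,
    zero_mul, Finset.sum_add_distrib, Finset.sum_ite_eq']
  congr 1 <;> exact ite_eq_left_iff.2 fun hm ↦ by rw [hf (by omega) hm, mul_zero]

theorem mul_bidiagonal_apply_succ (k j : ℕ) :
    (f * bidiagonal d b) k (j + 1) = f k (j + 1) * d (j + 1) + f k j * b j := by
  have hf : ∀ {m}, m ≤ j + 1 → m ∉ Finset.Icc k (j + 1) → f k m = 0 := fun hmj hm ↦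
    IncidenceAlgebra.apply_eq_zero_of_not_le (fun hkm ↦ hm (Finset.mem_Icc.2 ⟨hkm, hmj⟩)) f
  simp only [IncidenceAlgebra.mul_apply, bidiagonal, IncidenceAlgebra.coe_mk, mul_add, mul_ite,
    mul_zero, Finset.sum_add_distrib, add_left_inj, Finset.sum_ite_eq]
  congr 1 <;> exact ite_eq_left_iff.2 fun hm ↦ by rw [hf (by omega) hm, zero_mul]

end Semiring

variable {K : Type*} [Field K] (d b : ℕ → K)

/-- For injective `d`, the matrix whose `j`-th column is the eigenvector of `bidiagonal d b` for the
eigenvalue `d j`, normalised to have `j`-th entry `1`. -/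
def bidiagonalEigencols : IncidenceAlgebra K ℕ where
  toFun k j := if k ≤ j then ∏ i ∈ Finset.Ico k j, b i / (d j - d i) else 0
  eq_zero_of_not_le' _ _ h := if_neg h

/-- For injective `d`, the matrix whose `k`-th row is the left eigenvector of `bidiagonal d b`
for the eigenvalue `d k`, normalised to have `k`-th entry `1`. -/
def bidiagonalEigenrows : IncidenceAlgebra K ℕ where
  toFun k j := if k ≤ j then ∏ i ∈ Finset.Ico k j, b i / (d k - d (i + 1)) else 0
  eq_zero_of_not_le' _ _ h := if_neg h

variable {k j : ℕ}

theorem bidiagonalEigencols_apply_of_le (h : k ≤ j) :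
    bidiagonalEigencols d b k j = ∏ i ∈ Finset.Ico k j, b i / (d j - d i) :=
  if_pos h

theorem bidiagonalEigenrows_apply_of_le (h : k ≤ j) :
    bidiagonalEigenrows d b k j = ∏ i ∈ Finset.Ico k j, b i / (d k - d (i + 1)) :=
  if_pos h

theorem bidiagonalEigencols_apply_self (k : ℕ) : bidiagonalEigencols d b k k = 1 := by
  simp [bidiagonalEigencols]

theorem bidiagonalEigenrows_apply_self (k : ℕ) : bidiagonalEigenrows d b k k = 1 := by
  simp [bidiagonalEigenrows]

theorem bidiagonalEigencols_apply_of_lt (h : k < j) :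
    bidiagonalEigencols d b k j = b k / (d j - d k) * bidiagonalEigencols d b (k + 1) j := by
  rw [bidiagonalEigencols_apply_of_le d b h.le, bidiagonalEigencols_apply_of_le d b h,
    Finset.prod_eq_prod_Ico_succ_bot h]

theorem bidiagonalEigenrows_apply_succ_of_le (h : k ≤ j) :
    bidiagonalEigenrows d b k (j + 1) =
      bidiagonalEigenrows d b k j * (b j / (d k - d (j + 1))) := by
  rw [bidiagonalEigenrows_apply_of_le d b (h.trans j.le_succ),
    bidiagonalEigenrows_apply_of_le d b h, Finset.prod_Ico_succ_top h]

variable {d}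

theorem bidiagonal_mul_bidiagonalEigencols (hd : Function.Injective d) :
    bidiagonal d b * bidiagonalEigencols d b = bidiagonalEigencols d b * bidiagonal d 0 := by
  ext k j hkj
  obtain rfl | hlt := hkj.eq_or_lt
  · simp [bidiagonal_apply_self, mul_comm]
  · have hne : d j - d k ≠ 0 := sub_ne_zero.2 (hd.ne hlt.ne')
    obtain ⟨i, rfl⟩ := Nat.exists_eq_succ_of_ne_zero hlt.ne_bot
    rw [bidiagonal_mul_apply, mul_bidiagonal_apply_succ, bidiagonalEigencols_apply_of_lt d b hlt,
      Pi.zero_apply]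
    field_simp
    ring

theorem bidiagonalEigenrows_mul_bidiagonal (hd : Function.Injective d) :
    bidiagonalEigenrows d b * bidiagonal d b = bidiagonal d 0 * bidiagonalEigenrows d b := by
  ext k j hkj
  obtain rfl | hlt := hkj.eq_or_lt
  · simp [bidiagonal_apply_self, mul_comm]
  · have hne : d k - d j ≠ 0 := sub_ne_zero.2 (hd.ne hlt.ne)
    obtain ⟨i, rfl⟩ := Nat.exists_eq_succ_of_ne_zero hlt.ne_bot
    rw [bidiagonal_mul_apply, mul_bidiagonal_apply_succ,
      bidiagonalEigenrows_apply_succ_of_le d b (Nat.lt_succ_iff.1 hlt), Pi.zero_apply]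
    field_simp
    ring

theorem bidiagonalEigenrows_mul_bidiagonalEigencols (hd : Function.Injective d) :
    bidiagonalEigenrows d b * bidiagonalEigencols d b = 1 := by
  have hcomm : Commute (bidiagonal d 0) (bidiagonalEigenrows d b * bidiagonalEigencols d b) := by
    rw [Commute, SemiconjBy, ← mul_assoc, ← bidiagonalEigenrows_mul_bidiagonal b hd, mul_assoc,
      bidiagonal_mul_bidiagonalEigencols b hd, mul_assoc]
  refine incidenceAlgebra_eq_one_of_commute hcomm (by simpa only [bidiagonal_apply_self]) fun k ↦ ?_
  simp [bidiagonalEigenrows_apply_self, bidiagonalEigencols_apply_self]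

theorem bidiagonalEigencols_mul_bidiagonalEigenrows (hd : Function.Injective d) :
    bidiagonalEigencols d b * bidiagonalEigenrows d b = 1 := by
  have hcomm : Commute (bidiagonal d b) (bidiagonalEigencols d b * bidiagonalEigenrows d b) := by
    rw [Commute, SemiconjBy, ← mul_assoc, bidiagonal_mul_bidiagonalEigencols b hd, mul_assoc,
      ← bidiagonalEigenrows_mul_bidiagonal b hd, mul_assoc]
  refine incidenceAlgebra_eq_one_of_commute hcomm (by simpa only [bidiagonal_apply_self]) fun k ↦ ?_
  simp [bidiagonalEigenrows_apply_self, bidiagonalEigencols_apply_self]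

end Bidiagonal

theorem prod_Icc_one_sub_eq_prod_Ico {M : Type*} [CommMonoid M] (f : ℕ → M) {k j : ℕ} (hk : 1 ≤ k)
    (hkj : k ≤ j) : ∏ l ∈ Finset.Icc 1 (j - k), f (k - 1 + l) = ∏ i ∈ Finset.Ico k j, f i := by
  rw [← Finset.Ico_add_one_right_eq_Icc, Finset.prod_Ico_add]
  congr 2 <;> omega

theorem aCoef_injective : Function.Injective aCoef := by
  let a : ℕ → ℤ := fun k ↦ k * (k ^ 2 - 1 + if k = 1 then 1 else 0)
  have ha : StrictMono a := strictMono_nat_of_lt_succ fun k ↦ by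
    obtain rfl | rfl | hk : k = 0 ∨ k = 1 ∨ 2 ≤ k := by omega
    · simp [a]
    · simp [a]
    · have hk₀ : (2 : ℤ) ≤ k := by exact_mod_cast hk
      simp only [a, show k ≠ 1 by omega, show k + 1 ≠ 1 by omega, if_false]
      push_cast
      nlinarith [hk₀]
  have haCoef : aCoef = fun k ↦ (a k : ℂ) := by
    ext k
    simp [aCoef, a]
  rw [haCoef]
  exact Int.cast_injective.comp ha.injective

theorem neg_aCoef_injective : Function.Injective (-aCoef) :=
  neg_injective.comp aCoef_injective

/-- The superdiagonal `b` with `b₀` and `b₁` set to `0`, which decouples row `1` from the rows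
`k ≥ 2` on which `S` and `S⁻¹` are given by products. -/
noncomputable def decoupledCoef (Aμ Aρσ : ℝ) : ℕ → ℂ :=
  (Set.Ici 2).indicator (bCoef Aμ Aρσ)

section DecoupledCoef

variable (Aμ Aρσ : ℝ)

theorem prod_Ico_one_decoupledCoef_div_eq_zero {j : ℕ} (hj : 1 < j) (c : ℕ → ℂ) :
    ∏ i ∈ Finset.Ico 1 j, decoupledCoef Aμ Aρσ i / c i = 0 :=
  Finset.prod_eq_zero (Finset.left_mem_Ico.2 hj) (by simp [decoupledCoef])

theorem prod_Ico_decoupledCoef_div {k j : ℕ} (hk : 2 ≤ k) (c : ℕ → ℂ) :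
    ∏ i ∈ Finset.Ico k j, decoupledCoef Aμ Aρσ i / c i =
      ∏ i ∈ Finset.Ico k j, bCoef Aμ Aρσ i / c i :=
  Finset.prod_congr rfl fun i hi ↦ by
    rw [decoupledCoef, Set.indicator_of_mem (Set.mem_Ici.2 (hk.trans (Finset.mem_Ico.1 hi).1))]

theorem Smat_eq_bidiagonalEigencols {k : ℕ} (hk : 1 ≤ k) (j : ℕ) :
    Smat Aμ Aρσ k j = bidiagonalEigencols (-aCoef) (decoupledCoef Aμ Aρσ) k j := by
  by_cases hkj : k ≤ j
  swap
  · rw [IncidenceAlgebra.apply_eq_zero_of_not_le hkj, Smat, if_neg (by omega), if_neg (by omega)]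
  rw [bidiagonalEigencols_apply_of_le _ _ hkj]
  obtain rfl | hk₂ := hk.eq_or_lt
  · obtain rfl | hj := hkj.eq_or_lt
    · simp [Smat]
    · rw [prod_Ico_one_decoupledCoef_div_eq_zero Aμ Aρσ hj]
      simp [Smat, hj.ne']
  · rw [Smat, if_neg (by omega), if_pos ⟨hk₂, hkj⟩, prod_Ico_decoupledCoef_div Aμ Aρσ hk₂,
      prod_Icc_one_sub_eq_prod_Ico (fun i ↦ bCoef Aμ Aρσ i / (aCoef i - aCoef j)) hk hkj]
    simp only [Pi.neg_apply, neg_sub_neg]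

theorem Sinv_eq_bidiagonalEigenrows {k : ℕ} (hk : 1 ≤ k) (j : ℕ) :
    Sinv Aμ Aρσ k j = bidiagonalEigenrows (-aCoef) (decoupledCoef Aμ Aρσ) k j := by
  by_cases hkj : k ≤ j
  swap
  · rw [IncidenceAlgebra.apply_eq_zero_of_not_le hkj, Sinv, if_neg (by omega), if_neg (by omega)]
  rw [bidiagonalEigenrows_apply_of_le _ _ hkj]
  obtain rfl | hk₂ := hk.eq_or_lt
  · obtain rfl | hj := hkj.eq_or_lt
    · simp [Sinv]
    · rw [prod_Ico_one_decoupledCoef_div_eq_zero Aμ Aρσ hj]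
      simp [Sinv, hj.ne']
  · have hshift : ∀ l, k + l = k - 1 + l + 1 := by omega
    have hneg : ∀ i, bCoef Aμ Aρσ i / ((-aCoef) k - (-aCoef) (i + 1)) =
        -1 * (bCoef Aμ Aρσ i / (aCoef k - aCoef (i + 1))) := fun i ↦ by
      rw [Pi.neg_apply, Pi.neg_apply, neg_sub_neg, ← neg_sub, div_neg, neg_one_mul]
    rw [Sinv, if_neg (by omega), if_pos ⟨hk₂, hkj⟩]
    simp only [hshift]
    rw [prod_Icc_one_sub_eq_prod_Ico (fun i ↦ bCoef Aμ Aρσ i / (aCoef k - aCoef (i + 1))) hk hkj,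
      prod_Ico_decoupledCoef_div Aμ Aρσ hk₂, Finset.prod_congr rfl fun i _ ↦ hneg i,
      Finset.prod_mul_distrib, Finset.prod_const, Nat.card_Ico]

theorem tsum_Smat_mul_Sinv {k : ℕ} (hk : 1 ≤ k) (j : ℕ) :
    ∑' m, Smat Aμ Aρσ k m * Sinv Aμ Aρσ m j = if k = j then 1 else 0 := by
  rw [← IncidenceAlgebra.one_apply,
    ← bidiagonalEigencols_mul_bidiagonalEigenrows (decoupledCoef Aμ Aρσ) neg_aCoef_injective,
    ← tsum_incidenceAlgebra_mul]
  refine tsum_congr fun m ↦ ?_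
  rw [Smat_eq_bidiagonalEigencols Aμ Aρσ hk]
  by_cases hkm : k ≤ m
  · rw [Sinv_eq_bidiagonalEigenrows Aμ Aρσ (hk.trans hkm)]
  · rw [IncidenceAlgebra.apply_eq_zero_of_not_le hkm, zero_mul, zero_mul]

theorem tsum_Sinv_mul_Smat {k : ℕ} (hk : 1 ≤ k) (j : ℕ) :
    ∑' m, Sinv Aμ Aρσ k m * Smat Aμ Aρσ m j = if k = j then 1 else 0 := by
  rw [← IncidenceAlgebra.one_apply,
    ← bidiagonalEigenrows_mul_bidiagonalEigencols (decoupledCoef Aμ Aρσ) neg_aCoef_injective,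
    ← tsum_incidenceAlgebra_mul]
  refine tsum_congr fun m ↦ ?_
  rw [Sinv_eq_bidiagonalEigenrows Aμ Aρσ hk]
  by_cases hkm : k ≤ m
  · rw [Smat_eq_bidiagonalEigencols Aμ Aρσ (hk.trans hkm)]
  · rw [IncidenceAlgebra.apply_eq_zero_of_not_le hkm, zero_mul, zero_mul]

theorem Sinv_left_eigenvector {k : ℕ} (hk : 2 ≤ k) (j : ℕ) :
    -aCoef (j + 1) * Sinv Aμ Aρσ k (j + 1) + bCoef Aμ Aρσ j * Sinv Aμ Aρσ k j =
      -aCoef k * Sinv Aμ Aρσ k (j + 1) := by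
  have hrows := bidiagonalEigenrows_mul_bidiagonal (decoupledCoef Aμ Aρσ) neg_aCoef_injective
  have hentry := congr($hrows k (j + 1))
  rw [mul_bidiagonal_apply_succ, bidiagonal_mul_apply] at hentry
  simp only [← Sinv_eq_bidiagonalEigenrows Aμ Aρσ (one_le_two.trans hk), Pi.neg_apply,
    Pi.zero_apply, zero_mul, add_zero] at hentry
  have hcoef : Sinv Aμ Aρσ k j * decoupledCoef Aμ Aρσ j = Sinv Aμ Aρσ k j * bCoef Aμ Aρσ j := by
    by_cases hkj : k ≤ j
    · rw [decoupledCoef, Set.indicator_of_mem (Set.mem_Ici.2 (hk.trans hkj))]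
    · rw [Sinv_eq_bidiagonalEigenrows Aμ Aρσ (one_le_two.trans hk),
        IncidenceAlgebra.apply_eq_zero_of_not_le hkj, zero_mul, zero_mul]
  linear_combination hentry - hcoef

end DecoupledCoef

theorem S_Sinv_inverse_and_recursion_general (Aμ Aρσ : ℝ) :
    ((∀ k j : ℕ, 1 ≤ k → 1 ≤ j →
        ∑' m : ℕ, Smat Aμ Aρσ k m * Sinv Aμ Aρσ m j = if k = j then 1 else 0) ∧
      (∀ k j : ℕ, 1 ≤ k → 1 ≤ j →
        ∑' m : ℕ, Sinv Aμ Aρσ k m * Smat Aμ Aρσ m j = if k = j then 1 else 0)) ∧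
    ((∀ k j : ℕ, 2 ≤ k → k < j →
        (aCoef k - aCoef j) * Sinv Aμ Aρσ k j = -bCoef Aμ Aρσ (j - 1) * Sinv Aμ Aρσ k (j - 1)) ∧
      (∀ k j : ℕ, 2 ≤ k → 1 ≤ j →
        -aCoef j * Sinv Aμ Aρσ k j + bCoef Aμ Aρσ (j - 1) * Sinv Aμ Aρσ k (j - 1) =
          -aCoef k * Sinv Aμ Aρσ k j)) := by
  refine ⟨⟨fun k j hk _ ↦ tsum_Smat_mul_Sinv Aμ Aρσ hk j,
    fun k j hk _ ↦ tsum_Sinv_mul_Smat Aμ Aρσ hk j⟩, fun k j hk hkj ↦ ?_, fun k j hk hj ↦ ?_⟩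
  · obtain ⟨i, rfl⟩ := Nat.exists_eq_add_one_of_ne_zero hkj.ne_bot
    rw [Nat.add_sub_cancel]
    linear_combination Sinv_left_eigenvector Aμ Aρσ hk i
  · obtain ⟨i, rfl⟩ := Nat.exists_eq_add_of_le' hj
    exact Sinv_left_eigenvector Aμ Aρσ hk i

/-- Proposition 2.3 (diagonalization): `S` and `S⁻¹` are mutually inverse, and
`S⁻¹` satisfies the recursion that diagonalizes the upper triangular system
`M = -a·Id + b·shift`. -/
theorem S_Sinv_inverse_and_recursion (Aμ Aρσ : ℝ) (hAμ : Aμ ∈ Set.Icc (-1 : ℝ) 1) :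
    ((∀ k j : ℕ, 1 ≤ k → 1 ≤ j →
        ∑' m : ℕ, Smat Aμ Aρσ k m * Sinv Aμ Aρσ m j = if k = j then 1 else 0) ∧
      (∀ k j : ℕ, 1 ≤ k → 1 ≤ j →
        ∑' m : ℕ, Sinv Aμ Aρσ k m * Smat Aμ Aρσ m j = if k = j then 1 else 0)) ∧
    ((∀ k j : ℕ, 2 ≤ k → k < j →
        (aCoef k - aCoef j) * Sinv Aμ Aρσ k j = -bCoef Aμ Aρσ (j - 1) * Sinv Aμ Aρσ k (j - 1)) ∧
      (∀ k j : ℕ, 2 ≤ k → 1 ≤ j →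
        -aCoef j * Sinv Aμ Aρσ k j + bCoef Aμ Aρσ (j - 1) * Sinv Aμ Aρσ k (j - 1) =
          -aCoef k * Sinv Aμ Aρσ k j)) :=
  S_Sinv_inverse_and_recursion_general Aμ Aρσ
end

section
/- Let A_μ ∈ [−1,1] and A_{ρσ} ∈ ℝ, and define a_k, b_k and the matrices S and S⁻¹ as in the context. Then there exists a constant C_S, depending only on the product (1 − A_μ)|A_{ρσ}|, such that the induced operators on ℓ¹ are bounded with norm at most C_S: for every complex sequence z = (z_j)_{j≥1} with Σ_j |z_j| < ∞, the sums (Sz)_k = Σ_{j≥1} S_{k,j} z_j and (S⁻¹z)_k = Σ_{j≥1} S⁻¹_{k,j} z_j converge absolutely and Σ_{k≥1} |(Sz)_k| ≤ C_S Σ_{j≥1} |z_j| and Σ_{k≥1} |(S⁻¹z)_k| ≤ C_S Σ_{j≥1} |z_j|. -/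
open scoped BigOperators

/-!
Put `c = |(1 - A_μ) A_{ρσ}|`. For `2 ≤ k` one has
`|a_k - a_{k+d}| = d ((k + d)² + (k + d) k + k² - 1) ≥ d (k + d)`, so every factor
`b_m / (a_k - a_{k+d})` with `m ≤ k + d` is at most `c / d` in modulus. In the product defining an
entry of `S⁻¹` or `S` at distance `j - k` from the diagonal, `d` runs through `1, …, j - k`
(upwards for `S⁻¹`, downwards for `S`), so the entry is at most `c ^ (j - k) / (j - k)!`.
Absolute column sums are thus at most `exp c`, and the supremum of the absolute column sums bounds
the operator norm on `ℓ¹`.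
-/

section ColumnSums

open scoped ENNReal

variable {ι κ R : Type*} [NonUnitalNormedRing R] {M : ι → κ → R} {z : κ → R}

lemma tsum_tsum_enorm_mul_le {C : ℝ≥0∞} (hM : ∀ j, ∑' i, ‖M i j‖ₑ ≤ C) :
    ∑' i, ∑' j, ‖M i j * z j‖ₑ ≤ C * ∑' j, ‖z j‖ₑ :=
  calc
    ∑' i, ∑' j, ‖M i j * z j‖ₑ ≤ ∑' i, ∑' j, ‖M i j‖ₑ * ‖z j‖ₑ := by
      gcongr
      exact enorm_smul_le
    _ = ∑' j, (∑' i, ‖M i j‖ₑ) * ‖z j‖ₑ := by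
      rw [ENNReal.tsum_comm]
      simp only [ENNReal.tsum_mul_right]
    _ ≤ ∑' j, C * ‖z j‖ₑ := by
      gcongr with j
      exact hM j
    _ = C * ∑' j, ‖z j‖ₑ := ENNReal.tsum_mul_left

variable {C : ℝ}

lemma summable_norm_mul_of_tsum_enorm_col_le (hM : ∀ j, ∑' i, ‖M i j‖ₑ ≤ ENNReal.ofReal C)
    (hz : Summable fun j => ‖z j‖) (i : ι) : Summable fun j => ‖M i j * z j‖ := by
  rw [← tsum_enorm_ne_top_iff_summable_norm] at hz ⊢
  exact ne_top_of_le_ne_top (ENNReal.mul_ne_top ENNReal.ofReal_ne_top hz)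
    ((ENNReal.le_tsum i).trans (tsum_tsum_enorm_mul_le hM))

lemma tsum_ofReal_norm_tsum_mul_le (hM : ∀ j, ∑' i, ‖M i j‖ₑ ≤ ENNReal.ofReal C)
    (hz : Summable fun j => ‖z j‖) :
    ∑' i, ENNReal.ofReal ‖∑' j, M i j * z j‖ ≤ ENNReal.ofReal (C * ∑' j, ‖z j‖) := by
  rw [ENNReal.ofReal_mul' (tsum_nonneg fun _ => norm_nonneg _),
    ENNReal.ofReal_tsum_of_nonneg (fun _ => norm_nonneg _) hz]
  simp only [ofReal_norm]
  calc
    ∑' i, ‖∑' j, M i j * z j‖ₑ ≤ ∑' i, ∑' j, ‖M i j * z j‖ₑ := by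
      gcongr
      exact enorm_tsum_le_tsum_enorm
    _ ≤ ENNReal.ofReal C * ∑' j, ‖z j‖ₑ := tsum_tsum_enorm_mul_le hM

end ColumnSums

section FactorialDecay

open Finset
open scoped Nat

variable {c : ℝ}

lemma tsum_enorm_le_ofReal_exp {E : Type*} [SeminormedAddGroup E] {f : ℕ → E} {j : ℕ}
    (hc : 0 ≤ c) (hf : ∀ k ≤ j, ‖f k‖ ≤ c ^ (j - k) / (j - k)!) (hf_zero : ∀ k > j, f k = 0) :
    ∑' k, ‖f k‖ₑ ≤ ENNReal.ofReal (Real.exp c) := by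
  have hsum : ∑ k ∈ range (j + 1), ‖f k‖ ≤ Real.exp c :=
    calc
      ∑ k ∈ range (j + 1), ‖f k‖ ≤ ∑ k ∈ range (j + 1), c ^ (j - k) / (j - k)! :=
        sum_le_sum fun k hk => hf k (mem_range_succ_iff.mp hk)
      _ = ∑ d ∈ range (j + 1), c ^ d / d ! := sum_range_reflect (fun d => c ^ d / d !) (j + 1)
      _ ≤ Real.exp c := Real.sum_le_exp_of_nonneg hc (j + 1)
  simp only [← ofReal_norm]
  rw [tsum_eq_sum (s := range (j + 1)) fun k hk => by simp [hf_zero k (by simpa using hk)],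
    ← ENNReal.ofReal_sum_of_nonneg fun _ _ => norm_nonneg _]
  exact ENNReal.ofReal_le_ofReal hsum

variable {𝕜 : Type*} [NormedField 𝕜] {f : ℕ → 𝕜} {n : ℕ}

lemma norm_prod_Icc_le_pow_div_factorial (hf : ∀ d ∈ Icc 1 n, ‖f d‖ ≤ c / d) :
    ‖∏ d ∈ Icc 1 n, f d‖ ≤ c ^ n / n ! :=
  calc
    ‖∏ d ∈ Icc 1 n, f d‖ = ∏ d ∈ Icc 1 n, ‖f d‖ := norm_prod _ _
    _ ≤ ∏ d ∈ Icc 1 n, c / d := prod_le_prod (fun _ _ => norm_nonneg _) hf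
    _ = c ^ n / n ! := by
      rw [prod_div_distrib, prod_const, Nat.card_Icc, Nat.add_sub_cancel, ← Nat.cast_prod,
        ← Ico_add_one_right_eq_Icc, prod_Ico_id_eq_factorial]

lemma norm_prod_Icc_reflect_le_pow_div_factorial
    (hf : ∀ d ∈ Icc 1 n, ‖f (n + 1 - d)‖ ≤ c / d) :
    ‖∏ l ∈ Icc 1 n, f l‖ ≤ c ^ n / n ! := by
  have hreflect : ∏ d ∈ Icc 1 n, f (n + 1 - d) = ∏ l ∈ Icc 1 n, f l := by
    simpa [Ico_add_one_right_eq_Icc] using prod_Ico_reflect f 1 (Nat.le_succ (n + 1))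
  exact hreflect ▸ norm_prod_Icc_le_pow_div_factorial hf

end FactorialDecay

lemma mul_add_le_norm_aCoef_sub {k : ℕ} (hk : 2 ≤ k) (d : ℕ) :
    (d : ℝ) * (k + d) ≤ ‖aCoef k - aCoef (k + d)‖ := by
  have hk' : (2 : ℝ) ≤ k := by exact_mod_cast hk
  have hfactor : aCoef k - aCoef (k + d) =
      -((d * ((k + d) ^ 2 + (k + d) * k + k ^ 2 - 1) : ℝ) : ℂ) := by
    rw [aCoef, aCoef, if_neg (by lia), if_neg (by lia)]
    push_cast
    ring
  have hquad : (k + d : ℝ) ≤ (k + d) ^ 2 + (k + d) * k + k ^ 2 - 1 := by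
    nlinarith [Nat.cast_nonneg (α := ℝ) d]
  rw [hfactor, norm_neg, Complex.norm_real]
  exact (mul_le_mul_of_nonneg_left hquad d.cast_nonneg).trans (Real.le_norm_self _)

section Entries

open Finset
open scoped Nat

variable (Aμ Aρσ : ℝ)

lemma norm_bCoef (k : ℕ) : ‖bCoef Aμ Aρσ k‖ = |(1 - Aμ) * Aρσ| * k := by
  simp only [bCoef, norm_mul, Complex.norm_I, Complex.norm_real, Complex.norm_natCast,
    Real.norm_eq_abs, abs_mul, one_mul]

lemma norm_bCoef_div_aCoef_sub_le {k d m : ℕ} (hk : 2 ≤ k) (hd : 1 ≤ d) (hm : m ≤ k + d) :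
    ‖bCoef Aμ Aρσ m / (aCoef k - aCoef (k + d))‖ ≤ |(1 - Aμ) * Aρσ| / d := by
  have : (0 : ℝ) < d := by exact_mod_cast hd
  have hm' : (m : ℝ) ≤ k + d := by exact_mod_cast hm
  calc
    ‖bCoef Aμ Aρσ m / (aCoef k - aCoef (k + d))‖
        = |(1 - Aμ) * Aρσ| * m / ‖aCoef k - aCoef (k + d)‖ := by rw [norm_div, norm_bCoef]
    _ ≤ |(1 - Aμ) * Aρσ| * (k + d) / (d * (k + d)) := by
      gcongr
      exact mul_add_le_norm_aCoef_sub hk d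
    _ = |(1 - Aμ) * Aρσ| / d := mul_div_mul_right _ _ (by positivity)

lemma norm_Sinv_le (k j : ℕ) :
    ‖Sinv Aμ Aρσ k j‖ ≤ |(1 - Aμ) * Aρσ| ^ (j - k) / (j - k)! := by
  unfold Sinv
  split_ifs with h_one h_upper
  · simp [h_one]
  · rw [norm_mul, norm_pow, norm_neg, norm_one, one_pow, one_mul]
    refine norm_prod_Icc_le_pow_div_factorial fun d hd => ?_
    have hd_pos : 1 ≤ d := (mem_Icc.mp hd).1
    exact norm_bCoef_div_aCoef_sub_le Aμ Aρσ h_upper.1 hd_pos (by lia)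
  · rw [norm_zero]
    positivity

lemma norm_Smat_le (k j : ℕ) :
    ‖Smat Aμ Aρσ k j‖ ≤ |(1 - Aμ) * Aρσ| ^ (j - k) / (j - k)! := by
  unfold Smat
  split_ifs with h_one h_upper
  · simp [h_one]
  · refine norm_prod_Icc_reflect_le_pow_div_factorial fun d hd => ?_
    obtain ⟨hd_pos, hd_le⟩ := mem_Icc.mp hd
    obtain ⟨m, rfl⟩ : ∃ m, j = m + d := ⟨j - d, by lia⟩
    have hm : k - 1 + (m + d - k + 1 - d) = m := by lia
    rw [hm]
    exact norm_bCoef_div_aCoef_sub_le Aμ Aρσ (by lia) hd_pos (by lia)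
  · rw [norm_zero]
    positivity

variable {Aμ Aρσ}

lemma Sinv_eq_zero_of_lt {k j : ℕ} (h : j < k) : Sinv Aμ Aρσ k j = 0 := by
  rw [Sinv, if_neg (by lia), if_neg (by lia)]

lemma Smat_eq_zero_of_lt {k j : ℕ} (h : j < k) : Smat Aμ Aρσ k j = 0 := by
  rw [Smat, if_neg (by lia), if_neg (by lia)]

variable (Aμ Aρσ)

lemma tsum_enorm_Sinv_col_le (j : ℕ) :
    ∑' k, ‖Sinv Aμ Aρσ (k + 1) (j + 1)‖ₑ ≤ ENNReal.ofReal (Real.exp |(1 - Aμ) * Aρσ|) :=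
  tsum_enorm_le_ofReal_exp (abs_nonneg _)
    (fun k _ => by simpa only [Nat.add_sub_add_right] using norm_Sinv_le Aμ Aρσ (k + 1) (j + 1))
    (fun _ hk => Sinv_eq_zero_of_lt (Nat.succ_lt_succ hk))

lemma tsum_enorm_Smat_col_le (j : ℕ) :
    ∑' k, ‖Smat Aμ Aρσ (k + 1) (j + 1)‖ₑ ≤ ENNReal.ofReal (Real.exp |(1 - Aμ) * Aρσ|) :=
  tsum_enorm_le_ofReal_exp (abs_nonneg _)
    (fun k _ => by simpa only [Nat.add_sub_add_right] using norm_Smat_le Aμ Aρσ (k + 1) (j + 1))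
    (fun _ hk => Smat_eq_zero_of_lt (Nat.succ_lt_succ hk))

end Entries

theorem S_Sinv_l1_bounded_general (Aμ Aρσ : ℝ) {z : ℕ → ℂ}
    (hz : Summable fun j : ℕ => ‖z (j + 1)‖) :
    ((∀ k : ℕ, 1 ≤ k → Summable fun j : ℕ => ‖Smat Aμ Aρσ k (j + 1) * z (j + 1)‖) ∧
      (∀ k : ℕ, 1 ≤ k → Summable fun j : ℕ => ‖Sinv Aμ Aρσ k (j + 1) * z (j + 1)‖)) ∧
    ((∑' k : ℕ, ENNReal.ofReal ‖∑' j : ℕ, Smat Aμ Aρσ (k + 1) (j + 1) * z (j + 1)‖) ≤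
        ENNReal.ofReal (Real.exp |(1 - Aμ) * Aρσ| * ∑' j : ℕ, ‖z (j + 1)‖) ∧
      (∑' k : ℕ, ENNReal.ofReal ‖∑' j : ℕ, Sinv Aμ Aρσ (k + 1) (j + 1) * z (j + 1)‖) ≤
        ENNReal.ofReal (Real.exp |(1 - Aμ) * Aρσ| * ∑' j : ℕ, ‖z (j + 1)‖)) := by
  have hS := tsum_enorm_Smat_col_le Aμ Aρσ
  have hSinv := tsum_enorm_Sinv_col_le Aμ Aρσ
  refine ⟨⟨fun k hk => ?_, fun k hk => ?_⟩,
    tsum_ofReal_norm_tsum_mul_le hS hz, tsum_ofReal_norm_tsum_mul_le hSinv hz⟩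
  all_goals obtain ⟨k, rfl⟩ := Nat.exists_eq_add_of_le' hk
  · exact summable_norm_mul_of_tsum_enorm_col_le hS hz k
  · exact summable_norm_mul_of_tsum_enorm_col_le hSinv hz k

/-- Lemma 2.4: the operators `S` and `S⁻¹` are bounded on `ℓ¹`, with operator norm
at most a constant `C_S` depending only on `(1 − A_μ)|A_{ρσ}|`. Sequences are
indexed by `j ≥ 1`, encoded here as `j + 1` for `j : ℕ`. -/
theorem S_Sinv_l1_bounded :
    ∃ C : ℝ → ℝ, ∀ (Aμ Aρσ : ℝ), Aμ ∈ Set.Icc (-1 : ℝ) 1 →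
      ∀ z : ℕ → ℂ, Summable (fun j : ℕ => ‖z (j + 1)‖) →
        ((∀ k : ℕ, 1 ≤ k → Summable (fun j : ℕ => ‖Smat Aμ Aρσ k (j + 1) * z (j + 1)‖)) ∧
          (∀ k : ℕ, 1 ≤ k → Summable (fun j : ℕ => ‖Sinv Aμ Aρσ k (j + 1) * z (j + 1)‖))) ∧
        ((∑' k : ℕ, ENNReal.ofReal ‖∑' j : ℕ, Smat Aμ Aρσ (k + 1) (j + 1) * z (j + 1)‖) ≤
            ENNReal.ofReal (C ((1 - Aμ) * |Aρσ|) * ∑' j : ℕ, ‖z (j + 1)‖) ∧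
          (∑' k : ℕ, ENNReal.ofReal ‖∑' j : ℕ, Sinv Aμ Aρσ (k + 1) (j + 1) * z (j + 1)‖) ≤
            ENNReal.ofReal (C ((1 - Aμ) * |Aρσ|) * ∑' j : ℕ, ‖z (j + 1)‖)) := by
  refine ⟨fun x => Real.exp |x|, fun Aμ Aρσ _ z hz => ?_⟩
  simpa only [abs_mul, abs_abs] using S_Sinv_l1_bounded_general Aμ Aρσ hz
end

section
/- Let x_c ∈ ℝ², R > 0, and let f₀ : 𝕋 → (−1, ∞) be continuous and satisfy the two normalization conditions ∫_𝕋 (1 + f₀(α))³ (cos α, sin α) dα = (0,0) and (1/2)∫_𝕋 (1 + f₀(α))² dα = π. Define the closed curve z₀(α) = x_c + R(1 + f₀(α))(cos α, sin α). If the image of z₀ is a circle, i.e. there exist c ∈ ℝ² and r > 0 with |z₀(α) − c| = r for all α ∈ 𝕋, then necessarily c = x_c, r = R, and f₀ ≡ 0. -/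
open MeasureTheory

/-!
Translate and rescale so that `x_c = 0` and `R = 1`, and let the circle be centered at `(a, b)`.
The radii `ρ α` and `ρ (α + π)` of the curve `ρ = 1 + f₀` in opposite directions form a chord
whose midpoint is the foot of the perpendicular from `(a, b)`, so `ρ α - ρ (α + π) = 2 u α` with
`u α = a cos α + b sin α`. Pairing opposite directions, the moment of the enclosed region along
`(a, b)` is a positive multiple of `∫ (ρ α ^ 3 - ρ (α + π) ^ 3) (ρ α - ρ (α + π))`, whose
integrand is nonnegative. The centroid condition makes this integral vanish, hence `u = 0`, the
circle is centered at the origin, and the area condition fixes its radius.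
-/

theorem sub_mul_sub_pos_of_strictMonoOn {K : Type*} [Ring K] [LinearOrder K]
    [IsStrictOrderedRing K] {g : K → K} {s : Set K} (hg : StrictMonoOn g s) {x y : K} (hx : x ∈ s)
    (hy : y ∈ s) (hxy : x ≠ y) : 0 < (g x - g y) * (x - y) := by
  rcases hxy.lt_or_gt with hlt | hgt
  · exact mul_pos_of_neg_of_neg (sub_neg.2 (hg hx hy hlt)) (sub_neg.2 hlt)
  · exact mul_pos (sub_pos.2 (hg hy hx hgt)) (sub_pos.2 hgt)

theorem integral_sub_shift_mul_of_antiperiodic {F u : ℝ → ℝ} {c : ℝ}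
    (hFper : Function.Periodic F (2 * c)) (huanti : Function.Antiperiodic u c)
    (hint : IntervalIntegrable (fun x ↦ F x * u x) volume (-c) c) :
    ∫ x in (-c)..c, (F x - F (x + c)) * u x = 2 * ∫ x in (-c)..c, F x * u x := by
  have hper : Function.Periodic (fun x ↦ F x * u x) (2 * c) := hFper.mul huanti.periodic_two_mul
  have hintegrable : IntervalIntegrable (fun x ↦ F x * u x) volume 0 (0 + 2 * c) :=
    hper.intervalIntegrable_iff.1 (by rwa [show -c + 2 * c = c by ring])
  have hintshift : IntervalIntegrable (fun x ↦ F (x + c) * u (x + c)) volume (-c) c := by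
    convert hintegrable.comp_add_right c using 1 <;> ring
  have hshift : ∫ x in (-c)..c, F (x + c) * u (x + c) = ∫ x in (-c)..c, F x * u x := by
    rw [intervalIntegral.integral_comp_add_right (fun x ↦ F x * u x)]
    convert hper.intervalIntegral_add_eq (-c + c) (-c) using 2 <;> ring
  calc ∫ x in (-c)..c, (F x - F (x + c)) * u x
      = ∫ x in (-c)..c, (F x * u x + F (x + c) * u (x + c)) := by
        congr with x
        rw [huanti x]
        ring
    _ = (∫ x in (-c)..c, F x * u x) + ∫ x in (-c)..c, F (x + c) * u (x + c) :=
        intervalIntegral.integral_add hint hintshift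
    _ = 2 * ∫ x in (-c)..c, F x * u x := by rw [hshift, two_mul]

theorem antiperiodic_const_mul_cos_add_const_mul_sin (a b : ℝ) :
    Function.Antiperiodic (fun α ↦ a * Real.cos α + b * Real.sin α) Real.pi := fun α ↦ by
  simp only [Real.cos_add_pi, Real.sin_add_pi]
  ring

theorem integral_mul_const_mul_cos_add_const_mul_sin_eq_zero {F : ℝ → ℝ} {s t : ℝ}
    (hF : IntervalIntegrable F volume s t) (hcos : ∫ α in s..t, F α * Real.cos α = 0)
    (hsin : ∫ α in s..t, F α * Real.sin α = 0) (a b : ℝ) :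
    ∫ α in s..t, F α * (a * Real.cos α + b * Real.sin α) = 0 := by
  calc ∫ α in s..t, F α * (a * Real.cos α + b * Real.sin α)
      = ∫ α in s..t, (a * (F α * Real.cos α) + b * (F α * Real.sin α)) := by
        congr with α
        ring
    _ = a * (∫ α in s..t, F α * Real.cos α) + b * ∫ α in s..t, F α * Real.sin α := by
        rw [intervalIntegral.integral_add
          ((hF.mul_continuousOn Real.continuous_cos.continuousOn).const_mul a)
          ((hF.mul_continuousOn Real.continuous_sin.continuousOn).const_mul b),
          intervalIntegral.integral_const_mul, intervalIntegral.integral_const_mul]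
    _ = 0 := by rw [hcos, hsin, mul_zero, mul_zero, add_zero]

/-- The polar graph `α ↦ ρ α (cos α, sin α)` lies on the circle of center `(a, b)` and radius
`|r|`. The equation is squared, in coordinates, because `ℝ × ℝ` carries the sup norm. -/
def PolarGraphOnCircle (ρ : ℝ → ℝ) (a b r : ℝ) : Prop :=
  ∀ α, (ρ α * Real.cos α - a) ^ 2 + (ρ α * Real.sin α - b) ^ 2 = r ^ 2

namespace PolarGraphOnCircle

variable {ρ : ℝ → ℝ} {a b r : ℝ}

theorem sq_sub_two_mul_eq (h : PolarGraphOnCircle ρ a b r) (α : ℝ) :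
    ρ α ^ 2 - 2 * ρ α * (a * Real.cos α + b * Real.sin α) = r ^ 2 - (a ^ 2 + b ^ 2) := by
  linear_combination h α - ρ α ^ 2 * Real.sin_sq_add_cos_sq α

theorem sub_add_pi_eq (h : PolarGraphOnCircle ρ a b r) {α : ℝ}
    (hne : ρ α + ρ (α + Real.pi) ≠ 0) :
    ρ α - ρ (α + Real.pi) = 2 * (a * Real.cos α + b * Real.sin α) := by
  have hopp := h.sq_sub_two_mul_eq (α + Real.pi)
  rw [Real.cos_add_pi, Real.sin_add_pi] at hopp
  refine mul_right_cancel₀ hne ?_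
  linear_combination h.sq_sub_two_mul_eq α - hopp

theorem comp_sub_comp_add_pi_mul_pos (h : PolarGraphOnCircle ρ a b r) (hρ : ∀ α, 0 < ρ α)
    {g : ℝ → ℝ} (hg : StrictMonoOn g (Set.Ioi 0)) {α : ℝ}
    (hα : a * Real.cos α + b * Real.sin α ≠ 0) :
    0 < (g (ρ α) - g (ρ (α + Real.pi))) * (a * Real.cos α + b * Real.sin α) := by
  have hchord := h.sub_add_pi_eq (add_pos (hρ α) (hρ (α + Real.pi))).ne'
  have hne : ρ α ≠ ρ (α + Real.pi) := sub_ne_zero.1 (hchord ▸ mul_ne_zero two_ne_zero hα)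
  have hpos := sub_mul_sub_pos_of_strictMonoOn hg (hρ α) (hρ (α + Real.pi)) hne
  rw [hchord] at hpos
  linarith

theorem center_eq_zero_of_integral_eq_zero (h : PolarGraphOnCircle ρ a b r) (hρ : ∀ α, 0 < ρ α)
    (hcont : Continuous ρ) (hper : Function.Periodic ρ (2 * Real.pi)) {g : ℝ → ℝ}
    (hg : StrictMonoOn g (Set.Ioi 0)) (hgcont : ContinuousOn g (Set.Ioi 0))
    (hint : ∫ α in (-Real.pi)..Real.pi, g (ρ α) * (a * Real.cos α + b * Real.sin α) = 0) :
    a = 0 ∧ b = 0 := by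
  set u : ℝ → ℝ := fun α ↦ a * Real.cos α + b * Real.sin α with hu
  have hgρ : Continuous fun α ↦ g (ρ α) := hgcont.comp_continuous hcont hρ
  have hgρ' : Continuous fun α ↦ g (ρ (α + Real.pi)) := hgρ.comp (continuous_add_const Real.pi)
  have hucont : Continuous u := by fun_prop
  have hpaired : ∫ α in (-Real.pi)..Real.pi, (g (ρ α) - g (ρ (α + Real.pi))) * u α = 0 :=
    (integral_sub_shift_mul_of_antiperiodic (hper.comp g)
      (antiperiodic_const_mul_cos_add_const_mul_sin a b)
      ((hgρ.mul hucont).intervalIntegrable _ _)).trans (mul_eq_zero_of_right 2 hint)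
  have hpos : ∀ α, u α ≠ 0 → 0 < (g (ρ α) - g (ρ (α + Real.pi))) * u α :=
    fun _ ↦ h.comp_sub_comp_add_pi_mul_pos hρ hg
  have hnonneg : ∀ α, 0 ≤ (g (ρ α) - g (ρ (α + Real.pi))) * u α := fun α ↦ by
    rcases eq_or_ne (u α) 0 with hα | hα
    · rw [hα, mul_zero]
    · exact (hpos α hα).le
  have huzero : ∀ α ∈ Set.Icc (-Real.pi) Real.pi, u α = 0 := fun α hα ↦ by
    by_contra hne
    exact (intervalIntegral.integral_pos (by linarith [Real.pi_pos])
      ((hgρ.sub hgρ').mul hucont).continuousOn (fun β _ ↦ hnonneg β)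
      ⟨α, hα, hpos α hne⟩).ne' hpaired
  have hpi := Real.pi_pos
  constructor
  · simpa [hu] using huzero 0 ⟨by linarith, by linarith⟩
  · simpa [hu] using huzero (Real.pi / 2) ⟨by linarith, by linarith⟩

theorem eq_radius_of_center_eq_zero (h : PolarGraphOnCircle ρ 0 0 r) (hr : 0 ≤ r) {α : ℝ}
    (hρ : 0 ≤ ρ α) : ρ α = r :=
  (sq_eq_sq₀ hρ hr).1 (by simpa using h.sq_sub_two_mul_eq α)

end PolarGraphOnCircle

theorem eq_one_of_half_integral_sq_eq_pi {s : ℝ} (hs : 0 ≤ s)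
    (harea : (1 / 2) * ∫ _ in (-Real.pi)..Real.pi, s ^ 2 = Real.pi) : s = 1 := by
  rw [intervalIntegral.integral_const, smul_eq_mul] at harea
  have hsq : s ^ 2 = 1 := mul_left_cancel₀ Real.pi_ne_zero (by linarith)
  exact (pow_eq_one_iff_of_nonneg hs two_ne_zero).1 hsq

/-- Remark 1.2: under the normalization conditions (centroid at `x_c` and enclosed
area `πR²`), the polar-graph curve `z₀(α) = x_c + R(1+f₀(α))(cos α, sin α)` is a
circle if and only if `f₀ ≡ 0`; moreover, if its image is a circle of center `c` and
radius `r`, then necessarily `c = x_c` and `r = R`. -/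
theorem circle_iff_f_zero (xc : ℝ × ℝ) (R : ℝ) (hR : 0 < R) (f₀ : ℝ → ℝ)
    (hper : Function.Periodic f₀ (2 * Real.pi)) (hcont : Continuous f₀)
    (hlb : ∀ α, -1 < f₀ α)
    (hcentroid₁ : ∫ α in (-Real.pi)..Real.pi, (1 + f₀ α) ^ 3 * Real.cos α = 0)
    (hcentroid₂ : ∫ α in (-Real.pi)..Real.pi, (1 + f₀ α) ^ 3 * Real.sin α = 0)
    (harea : (1 / 2) * ∫ α in (-Real.pi)..Real.pi, (1 + f₀ α) ^ 2 = Real.pi)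
    (c : ℝ × ℝ) (r : ℝ) (hr : 0 < r)
    (hcircle : ∀ α : ℝ,
      (xc.1 + R * (1 + f₀ α) * Real.cos α - c.1) ^ 2 +
        (xc.2 + R * (1 + f₀ α) * Real.sin α - c.2) ^ 2 = r ^ 2) :
    c = xc ∧ r = R ∧ ∀ α, f₀ α = 0 := by
  have hρ : ∀ α, 0 < 1 + f₀ α := fun α ↦ by linarith [hlb α]
  have hscaled : PolarGraphOnCircle (fun α ↦ 1 + f₀ α) ((c.1 - xc.1) / R) ((c.2 - xc.2) / R)
      (r / R) := fun α ↦ by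
    field_simp
    linear_combination hcircle α
  have hmoment := integral_mul_const_mul_cos_add_const_mul_sin_eq_zero
    (F := fun α ↦ (1 + f₀ α) ^ 3) (Continuous.intervalIntegrable (by fun_prop) _ _)
    hcentroid₁ hcentroid₂ ((c.1 - xc.1) / R) ((c.2 - xc.2) / R)
  obtain ⟨hc₁, hc₂⟩ := hscaled.center_eq_zero_of_integral_eq_zero hρ (by fun_prop)
    (hper.comp (1 + ·)) (g := (· ^ 3)) (Odd.strictMono_pow (by decide) |>.strictMonoOn _)
    (continuous_pow 3).continuousOn hmoment
  rw [hc₁, hc₂] at hscaled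
  have hconst : ∀ α, 1 + f₀ α = r / R := fun α ↦
    hscaled.eq_radius_of_center_eq_zero (by positivity) (hρ α).le
  simp only [hconst] at harea
  have hratio : r / R = 1 := eq_one_of_half_integral_sq_eq_pi (by positivity) harea
  refine ⟨Prod.ext ?_ ?_, (div_eq_one_iff_eq hR.ne').1 hratio, fun α ↦ ?_⟩
  · exact sub_eq_zero.1 ((div_eq_zero_iff.1 hc₁).resolve_right hR.ne')
  · exact sub_eq_zero.1 ((div_eq_zero_iff.1 hc₂).resolve_right hR.ne')
  · linarith [hconst α]
end
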